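/- Let X be a Banach function space over a finite measure space and m : Σ → X a σ-additive vector measure. Assume: (a) X has the weak Banach-Saks property; (b) both X and X* have the subsequence splitting property; (c) m is separable and positive, i.e. m(A) ∈ X⁺ for every A ∈ Σ; (d) the range m(Σ) of m has uniformly a.c. norm in X. Then the Banach function space L¹(m), regarded as a B.f.s. over a Rybakov control measure, has both the subsequence splitting property and the weak Banach-Saks property. -/

import Mathlib

open MeasureTheory Filter Topology
open scoped ENNReal

noncomputable section

namespace Paper

variable {Ω : Type*} [MeasurableSpace Ω]
variable {X : Type*} [NormedAddCommGroup X] [NormedSpace ℝ X]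

/-- The signed measure `x* ∘ m` for a functional `x*` and vector measure `m`. -/
def dualApply (m : VectorMeasure Ω X) (x : X →L[ℝ] ℝ) : SignedMeasure Ω :=
  m.mapRange x.toLinearMap.toAddMonoidHom x.continuous

/-- The semivariation `‖m‖(A)` of a vector measure. -/
def semivar (m : VectorMeasure Ω X) (A : Set Ω) : ℝ≥0∞ :=
  ⨆ x : {x : X →L[ℝ] ℝ // ‖x‖ ≤ 1}, (dualApply m x.1).totalVariation A

/-- `P` holds `‖m‖`-almost everywhere. -/
def MAE (m : VectorMeasure Ω X) (P : Ω → Prop) : Prop :=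
  ∃ N : Set Ω, MeasurableSet N ∧ semivar m N = 0 ∧ ∀ ω ∉ N, P ω

/-- The integral `∫_A f ds` of a real function with respect to a signed measure. -/
def sIntegral (s : SignedMeasure Ω) (f : Ω → ℝ) (A : Set Ω) : ℝ :=
  (∫ ω in A, f ω ∂s.toJordanDecomposition.posPart) -
    ∫ ω in A, f ω ∂s.toJordanDecomposition.negPart

/-- `f` is integrable with respect to the vector measure `m` (Bartle-Dunford-Schwartz). -/
def MIntegrable (m : VectorMeasure Ω X) (f : Ω → ℝ) : Prop :=
  Measurable f ∧
  (∀ x : X →L[ℝ] ℝ, Integrable f ((dualApply m x).totalVariation)) ∧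
  (∀ A : Set Ω, MeasurableSet A →
    ∃ v : X, ∀ x : X →L[ℝ] ℝ, x v = sIntegral (dualApply m x) f A)

open Classical in
/-- The vector integral `∫_A f dm ∈ X`. -/
def mIntegral (m : VectorMeasure Ω X) (f : Ω → ℝ) (A : Set Ω) : X :=
  if h : ∃ v : X, ∀ x : X →L[ℝ] ℝ, x v = sIntegral (dualApply m x) f A then h.choose
  else 0

/-- The norm of `L¹(m)`: `‖f‖ = sup_{‖x*‖ ≤ 1} ∫ |f| d|x*m|`. -/
def mNorm (m : VectorMeasure Ω X) (f : Ω → ℝ) : ℝ :=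
  ⨆ x : {x : X →L[ℝ] ℝ // ‖x‖ ≤ 1}, ∫ ω, |f ω| ∂(dualApply m x.1).totalVariation

/-- The vector measure `m` is separable: the pseudometric space `(Σ, d_m)`,
`d_m(A,B) = ‖m‖(A △ B)`, is separable. -/
def SeparableVM (m : VectorMeasure Ω X) : Prop :=
  ∃ D : Set (Set Ω), D.Countable ∧ (∀ B ∈ D, MeasurableSet B) ∧
    ∀ A : Set Ω, MeasurableSet A → ∀ ε : ℝ, 0 < ε →
      ∃ B ∈ D, semivar m (symmDiff A B) < ENNReal.ofReal ε

section FunctionSpace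

variable {S : Type*} [MeasurableSpace S]

/-- `T` is a bounded linear functional on the function space determined by the
membership predicate `mem` and the norm `nrm`. -/
def IsBddLinFunctional (mem : (S → ℝ) → Prop) (nrm : (S → ℝ) → ℝ)
    (T : (S → ℝ) → ℝ) : Prop :=
  (∀ f g, mem f → mem g → T (f + g) = T f + T g) ∧
  (∀ (c : ℝ) (f), mem f → T (c • f) = c * T f) ∧
  (∃ C : ℝ, ∀ f, mem f → |T f| ≤ C * nrm f)

/-- `f` is a weakly null sequence in the function space `(mem, nrm)`. -/
def WeaklyNullSeq (mem : (S → ℝ) → Prop) (nrm : (S → ℝ) → ℝ) (f : ℕ → S → ℝ) : Prop :=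
  ∀ T : (S → ℝ) → ℝ, IsBddLinFunctional mem nrm T →
    Tendsto (fun n => T (f n)) atTop (nhds 0)

/-- The set `K` has uniformly absolutely continuous norm in the function space with
norm `nrm` over the measure `μ`. -/
def UnifACNorm (μ : Measure S) (nrm : (S → ℝ) → ℝ) (K : Set (S → ℝ)) : Prop :=
  ∀ ε : ℝ, 0 < ε → ∃ δ : ℝ, 0 < δ ∧ ∀ A : Set S, MeasurableSet A →
    μ A < ENNReal.ofReal δ → ∀ f ∈ K, nrm (A.indicator f) ≤ ε

/-- The subsequence splitting property for the function space `(mem, nrm)` over `μ`. -/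
def HasSSP (μ : Measure S) (mem : (S → ℝ) → Prop) (nrm : (S → ℝ) → ℝ) : Prop :=
  ∀ f : ℕ → S → ℝ, (∀ n, mem (f n)) → (∃ C : ℝ, ∀ n, nrm (f n) ≤ C) →
    ∃ σ : ℕ → ℕ, StrictMono σ ∧
      ∃ g h : ℕ → S → ℝ,
        (∀ n, mem (g n)) ∧ (∀ n, mem (h n)) ∧
        (∀ n, f (σ n) = g n + h n) ∧
        (∀ n, (fun s => g n s * h n s) =ᵐ[μ] 0) ∧
        UnifACNorm μ nrm (Set.range g) ∧
        (∀ i j, i ≠ j → (fun s => h i s * h j s) =ᵐ[μ] 0)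

/-- The weak Banach-Saks property for the function space `(mem, nrm)`. -/
def HasWBS (mem : (S → ℝ) → Prop) (nrm : (S → ℝ) → ℝ) : Prop :=
  ∀ f : ℕ → S → ℝ, (∀ n, mem (f n)) → WeaklyNullSeq mem nrm f →
    ∃ σ : ℕ → ℕ, StrictMono σ ∧
      Tendsto (fun n : ℕ => nrm ((n : ℝ)⁻¹ • ∑ k ∈ Finset.range n, f (σ k))) atTop (nhds 0)

end FunctionSpace

/-- A Banach function space over `(S, μ)`: an (abstract) normed space `X` together with
a linear embedding `J` into measurable functions on `S`, separating points modulo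
`μ`-null sets and satisfying the ideal property. -/
structure BFS (S : Type*) [MeasurableSpace S] (μ : Measure S)
    (X : Type*) [NormedAddCommGroup X] [NormedSpace ℝ X] where
  J : X →ₗ[ℝ] (S → ℝ)
  aemeasurable : ∀ x : X, AEMeasurable (J x) μ
  eq_zero : ∀ x : X, J x =ᵐ[μ] 0 → x = 0
  ideal : ∀ (x : X) (g : S → ℝ), AEMeasurable g μ →
    (∀ᵐ s ∂μ, |g s| ≤ |J x s|) → ∃ y : X, J y =ᵐ[μ] g ∧ ‖y‖ ≤ ‖x‖

variable {S : Type*} [MeasurableSpace S] {μ : Measure S}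

/-- The set `K ⊆ X` has uniformly absolutely continuous norm in the B.f.s. `X`. -/
def BFS.UnifAC (B : BFS S μ X) (K : Set X) : Prop :=
  ∀ ε : ℝ, 0 < ε → ∃ δ : ℝ, 0 < δ ∧ ∀ A : Set S, MeasurableSet A →
    μ A < ENNReal.ofReal δ → ∀ x ∈ K, ∀ y : X, B.J y =ᵐ[μ] A.indicator (B.J x) → ‖y‖ ≤ ε

/-- The B.f.s. `X` has absolutely continuous norm. -/
def BFS.ACNorm (B : BFS S μ X) : Prop :=
  ∀ x : X, ∀ ε : ℝ, 0 < ε → ∃ δ : ℝ, 0 < δ ∧ ∀ A : Set S, MeasurableSet A →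
    μ A < ENNReal.ofReal δ → ∀ y : X, B.J y =ᵐ[μ] A.indicator (B.J x) → ‖y‖ ≤ ε

/-- The subsequence splitting property for the B.f.s. `X`. -/
def BFS.SSP (B : BFS S μ X) : Prop :=
  ∀ f : ℕ → X, (∃ C : ℝ, ∀ n, ‖f n‖ ≤ C) →
    ∃ σ : ℕ → ℕ, StrictMono σ ∧
      ∃ g h : ℕ → X,
        (∀ n, f (σ n) = g n + h n) ∧
        (∀ n, (fun s => B.J (g n) s * B.J (h n) s) =ᵐ[μ] 0) ∧
        B.UnifAC (Set.range g) ∧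
        (∀ i j, i ≠ j → (fun s => B.J (h i) s * B.J (h j) s) =ᵐ[μ] 0)

/-- The weak Banach-Saks property for a normed space `Z`: every weakly null sequence has a
subsequence whose arithmetic means converge to zero in norm. -/
def WeakBanachSaks (Z : Type*) [NormedAddCommGroup Z] [NormedSpace ℝ Z] : Prop :=
  ∀ z : ℕ → Z, (∀ φ : Z →L[ℝ] ℝ, Tendsto (fun n => φ (z n)) atTop (nhds 0)) →
    ∃ σ : ℕ → ℕ, StrictMono σ ∧
      Tendsto (fun n : ℕ => ‖(n : ℝ)⁻¹ • ∑ k ∈ Finset.range n, z (σ k)‖) atTop (nhds 0)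

/-!
Since `m` is positive, `‖f‖_{L¹(m)} = ‖∫ |f| dm‖_X`, so norms in `L¹(m)` can be read off in `X`.

*Splitting.* Let `(fₙ)` be bounded in `L¹(m)` and split a subsequence of `∫ |fₙ| dm = Gₙ + Hₙ`
in `X`. For levels `s₀ < s₁ < …` the integrals of `|fₙ|` over the bands `s_k < |fₙ| ≤ s_{k+1}` are
positive, are dominated by multiples of `e = m(Ω)`, and have sum at most `Gₙ + Hₙ`. The supports of
the `Hₙ` shrink, so a band integral of norm `> ε` exceeds a fixed `a > 0` on a set of fixed measure
`d > 0`; as `(Gₙ + Hₙ)` is bounded in measure, only boundedly many bands are that large. Hence for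
every `ε` there is a level above which, frequently in `n`, all bands up to a prescribed height have
norm at most `ε`. Along a subsequence the parts of `fₙ` below `2ⁿ` thus have uniformly a.c. norm,
and the sets `{|fₙ| > 2ⁿ}`, of summable measure, can be made disjoint at a small cost.

*Weak Banach-Saks.* Split a weakly null sequence as `fₙ = gₙ + hₙ`. The `gₙ` are uniformly
integrable with integrals tending to zero over every set, so Cesàro means of a subsequence tend to
zero in `L¹` of the control measure (by truncation, from the Hilbert space case) and then in
`L¹(m)`; in particular `(gₙ)` and so `(hₙ)` is weakly null. The `hₙ` being disjoint, `∫ |hₙ| dm` is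
weakly null in `X`, and the weak Banach-Saks property of `X` applies to it.
-/

/-! ### Banach-Saks theorems -/

section CesaroMeans

variable {E F : Type*} [AddCommGroup E] [Module ℝ E] [AddCommGroup F] [Module ℝ F]

/-- The arithmetic mean of the first `n` terms of `u`; the mean of no terms is `0`. -/
def cesaroMean (u : ℕ → E) (n : ℕ) : E :=
  (n : ℝ)⁻¹ • ∑ k ∈ Finset.range n, u k

theorem cesaroMean_add (u v : ℕ → E) (n : ℕ) :
    cesaroMean (fun k => u k + v k) n = cesaroMean u n + cesaroMean v n := by
  simp only [cesaroMean, Finset.sum_add_distrib, smul_add]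

theorem cesaroMean_sub (u v : ℕ → E) (n : ℕ) :
    cesaroMean (fun k => u k - v k) n = cesaroMean u n - cesaroMean v n := by
  simp only [cesaroMean, Finset.sum_sub_distrib, smul_sub]

theorem cesaroMean_const (v : E) {n : ℕ} (hn : n ≠ 0) : cesaroMean (fun _ => v) n = v := by
  rw [cesaroMean, Finset.sum_const, Finset.card_range, ← Nat.cast_smul_eq_nsmul ℝ,
    inv_smul_smul₀ (Nat.cast_ne_zero.2 hn)]

theorem map_cesaroMean (T : E →ₗ[ℝ] F) (u : ℕ → E) (n : ℕ) :
    T (cesaroMean u n) = cesaroMean (fun k => T (u k)) n := by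
  simp only [cesaroMean, map_smul, map_sum]

theorem coe_cesaroMean {p : Submodule ℝ E} (u : ℕ → p) (n : ℕ) :
    ((cesaroMean u n : p) : E) = cesaroMean (fun k => (u k : E)) n :=
  map_cesaroMean p.subtype u n

theorem cesaroMean_mem {s : Set E} (hs : Convex ℝ s) (h0 : 0 ∈ s) {u : ℕ → E} {n : ℕ}
    (hu : ∀ k < n, u k ∈ s) : cesaroMean u n ∈ s := by
  rcases eq_or_ne n 0 with rfl | hn
  · simpa [cesaroMean] using h0
  · rw [cesaroMean, Finset.smul_sum]
    refine hs.sum_mem (fun _ _ => by positivity) ?_ fun k hk => hu k (Finset.mem_range.1 hk)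
    simp [hn]

end CesaroMeans

section Hilbert

variable {H : Type*} [NormedAddCommGroup H] [InnerProductSpace ℝ H]

theorem norm_sum_range_sq_le {b : ℕ → H} {C : ℝ} (hb : ∀ n, ‖b n‖ ≤ C) {w : ℕ → ℝ}
    (hw0 : ∀ n, 0 ≤ w n) (hbw : ∀ i j, i < j → |inner ℝ (b i) (b j)| ≤ w i) (n : ℕ) :
    ‖∑ k ∈ Finset.range n, b k‖ ^ 2 ≤ n * C ^ 2 + 2 * n * ∑ i ∈ Finset.range n, w i := by
  induction n with
  | zero => simp
  | succ n ih =>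
    rw [Finset.sum_range_succ, Finset.sum_range_succ, norm_add_sq_real]
    have hinner : inner ℝ (∑ k ∈ Finset.range n, b k) (b n) ≤ ∑ i ∈ Finset.range n, w i := by
      rw [sum_inner]
      exact Finset.sum_le_sum fun i hi => (le_abs_self _).trans (hbw i n (Finset.mem_range.1 hi))
    have hsq : ‖b n‖ ^ 2 ≤ C ^ 2 := pow_le_pow_left₀ (norm_nonneg _) (hb n) 2
    have hnw : 0 ≤ (n : ℝ) * w n := mul_nonneg n.cast_nonneg (hw0 n)
    push_cast
    linarith [hw0 n]

theorem tendsto_cesaroMean_of_almost_orthogonal {b : ℕ → H} {C : ℝ} (hb : ∀ n, ‖b n‖ ≤ C)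
    {w : ℕ → ℝ} (hw0 : ∀ n, 0 ≤ w n) (hw : Tendsto w atTop (𝓝 0))
    (hbw : ∀ i j, i < j → |inner ℝ (b i) (b j)| ≤ w i) :
    Tendsto (cesaroMean b) atTop (𝓝 0) := by
  have hbound : Tendsto (fun n : ℕ => C ^ 2 * (n : ℝ)⁻¹ +
      2 * ((n : ℝ)⁻¹ * ∑ i ∈ Finset.range n, w i)) atTop (𝓝 0) := by
    simpa using ((tendsto_inv_atTop_nhds_zero_nat (𝕜 := ℝ)).const_mul (C ^ 2)).add
      (hw.cesaro.const_mul 2)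
  have hsq : Tendsto (fun n => ‖cesaroMean b n‖ ^ 2) atTop (𝓝 0) := by
    refine squeeze_zero (fun n => by positivity) (fun n => ?_) hbound
    rcases eq_or_ne n 0 with rfl | hn
    · simp [cesaroMean]
    calc ‖cesaroMean b n‖ ^ 2
        = ((n : ℝ)⁻¹) ^ 2 * ‖∑ k ∈ Finset.range n, b k‖ ^ 2 := by
          rw [cesaroMean, norm_smul, mul_pow, norm_inv, Real.norm_natCast]
      _ ≤ ((n : ℝ)⁻¹) ^ 2 * (n * C ^ 2 + 2 * n * ∑ i ∈ Finset.range n, w i) := by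
          gcongr; exact norm_sum_range_sq_le hb hw0 hbw n
      _ = _ := by field_simp
  rw [tendsto_zero_iff_norm_tendsto_zero]
  simpa using hsq.sqrt

theorem exists_tendsto_inner_hyperfilter [CompleteSpace H] {a : ℕ → H} {C : ℝ}
    (ha : ∀ n, ‖a n‖ ≤ C) :
    ∃ v : H, ∀ x : H, Tendsto (fun n => inner ℝ (a n) x) (hyperfilter ℕ : Filter ℕ)
      (𝓝 (inner ℝ v x)) := by
  let A : ℕ → WeakDual ℝ H := fun n => StrongDual.toWeakDual (InnerProductSpace.toDual ℝ H (a n))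
  obtain ⟨φ, -, hφ : Tendsto A (hyperfilter ℕ : Filter ℕ) (𝓝 φ)⟩ :=
    (WeakDual.isCompact_closedBall (𝕜 := ℝ) (E := H) 0 C).ultrafilter_le_nhds
      ((hyperfilter ℕ).map A)
      (le_principal_iff.2 (Filter.mem_map.2 (univ_mem' fun n => by simpa [A] using ha n)))
  refine ⟨(InnerProductSpace.toDual ℝ H).symm (WeakDual.toStrongDual φ), fun x => ?_⟩
  rw [InnerProductSpace.toDual_symm_apply]
  exact ((WeakDual.eval_continuous x).tendsto φ).comp hφ

theorem exists_strictMono_pairwise {P : ℕ → ℕ → Prop}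
    (hP : ∀ x, ∀ᶠ y in (hyperfilter ℕ : Filter ℕ), P x y) :
    ∃ σ : ℕ → ℕ, StrictMono σ ∧ ∀ i j, i < j → P (σ i) (σ j) := by
  obtain ⟨σ, -, hσ⟩ := exists_seq_of_forall_finset_exists (fun _ : ℕ => True)
    (fun x y => x < y ∧ P x y) fun s _ => by
      have hs : ∀ x ∈ s, ∀ᶠ y in (hyperfilter ℕ : Filter ℕ), x < y ∧ P x y := fun x _ =>
        ((eventually_gt_atTop x).filter_mono Nat.hyperfilter_le_atTop).and (hP x)
      obtain ⟨y, hy⟩ := ((eventually_all_finset s).2 hs).exists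
      exact ⟨y, trivial, hy⟩
  exact ⟨σ, fun i j hij => (hσ i j hij).1, fun i j hij => (hσ i j hij).2⟩

theorem exists_subseq_almost_orthogonal {b : ℕ → ℕ → H}
    (hb : ∀ t x, Tendsto (fun n => inner ℝ x (b t n)) (hyperfilter ℕ : Filter ℕ) (𝓝 0)) :
    ∃ σ : ℕ → ℕ, StrictMono σ ∧ ∀ i j, i < j → ∀ t ≤ σ i,
      |inner ℝ (b t (σ i)) (b t (σ j))| ≤ 1 / ((σ i : ℝ) + 1) := by
  refine exists_strictMono_pairwise
    (P := fun x y => ∀ t ≤ x, |inner ℝ (b t x) (b t y)| ≤ 1 / ((x : ℝ) + 1)) fun x => ?_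
  refine ((Set.finite_Iic x).eventually_all).2 fun t _ => ?_
  have habs : Tendsto (fun y => |inner ℝ (b t x) (b t y)|) (hyperfilter ℕ : Filter ℕ) (𝓝 0) := by
    simpa using (hb t (b t x)).abs
  exact habs.eventually_le_const (by positivity)

theorem tendsto_cesaroMean_subseq {b : ℕ → H} {C : ℝ} (hb : ∀ n, ‖b n‖ ≤ C) {t : ℕ}
    {σ : ℕ → ℕ} (hσ : StrictMono σ)
    (horth : ∀ i j, i < j → t ≤ σ i → |inner ℝ (b (σ i)) (b (σ j))| ≤ 1 / ((σ i : ℝ) + 1)) :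
    Tendsto (cesaroMean fun k => b (σ k)) atTop (𝓝 0) := by
  refine tendsto_cesaroMean_of_almost_orthogonal (fun k => hb (σ k))
    (w := fun i => if i < t then C ^ 2 else 1 / ((i : ℝ) + 1))
    (fun i => by split_ifs <;> positivity) ?_ fun i j hij => ?_
  · refine (tendsto_one_div_add_atTop_nhds_zero_nat (𝕜 := ℝ)).congr' ?_
    filter_upwards [eventually_ge_atTop t] with i hi
    rw [if_neg (not_lt.2 hi)]
  · split_ifs with hi
    · calc |inner ℝ (b (σ i)) (b (σ j))| ≤ ‖b (σ i)‖ * ‖b (σ j)‖ := abs_real_inner_le_norm _ _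
        _ ≤ C * C := mul_le_mul (hb _) (hb _) (norm_nonneg _) ((norm_nonneg _).trans (hb 0))
        _ = C ^ 2 := (sq C).symm
    · have hiσ : i ≤ σ i := hσ.le_apply
      refine (horth i j hij ((not_lt.1 hi).trans hiσ)).trans ?_
      gcongr

theorem exists_subseq_tendsto_cesaroMean [CompleteSpace H] {a : ℕ → ℕ → H} {C : ℕ → ℝ}
    (ha : ∀ t n, ‖a t n‖ ≤ C t) :
    ∃ v : ℕ → H, (∀ t x, Tendsto (fun n => inner ℝ (a t n) x) (hyperfilter ℕ : Filter ℕ)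
      (𝓝 (inner ℝ (v t) x))) ∧ ∃ σ : ℕ → ℕ, StrictMono σ ∧ ∀ τ : ℕ → ℕ, StrictMono τ → ∀ t,
      Tendsto (cesaroMean fun k => a t (σ (τ k))) atTop (𝓝 (v t)) := by
  choose v hv using fun t => exists_tendsto_inner_hyperfilter (ha t)
  have hnull : ∀ t x, Tendsto (fun n => inner ℝ x (a t n - v t)) (hyperfilter ℕ : Filter ℕ)
      (𝓝 0) := fun t x => by
    have h := (hv t x).sub_const (inner ℝ (v t) x)
    rw [sub_self] at h
    refine h.congr fun n => ?_
    rw [← inner_sub_left, real_inner_comm]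
  obtain ⟨σ, hσ, horth⟩ := exists_subseq_almost_orthogonal hnull
  refine ⟨v, hv, σ, hσ, fun τ hτ t => ?_⟩
  have hbound : ∀ n, ‖a t n - v t‖ ≤ C t + ‖v t‖ := fun n =>
    (norm_sub_le _ _).trans (by gcongr; exact ha t n)
  have hmean := (tendsto_cesaroMean_subseq hbound (hσ.comp hτ) fun i j hij hi =>
    horth _ _ (hτ hij) t hi).add_const (v t)
  rw [zero_add] at hmean
  refine hmean.congr' ?_
  filter_upwards [eventually_ne_atTop 0] with n hn
  rw [cesaroMean_sub, cesaroMean_const _ hn, sub_add_cancel]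
  rfl

end Hilbert

section UniformlyIntegrable

variable {α : Type*} {η : Measure Ω}

/-- The function `f` cut down to the set where `|f|` is below the level `t`. -/
def trunc (t : ℕ) (f : α → ℝ) : α → ℝ :=
  {ω | (t : ℝ) ≤ |f ω|}ᶜ.indicator f

theorem abs_trunc_le (t : ℕ) (f : α → ℝ) (ω : α) : |trunc t f ω| ≤ t := by
  by_cases h : (t : ℝ) ≤ |f ω|
  · simp [trunc, h]
  · simpa [trunc, h] using (not_le.1 h).le

theorem sub_trunc (t : ℕ) (f : α → ℝ) :
    f - trunc t f = {ω | (t : ℝ) ≤ |f ω|}.indicator f := by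
  rw [trunc, Set.indicator_compl, sub_sub_cancel]

theorem aestronglyMeasurable_trunc {f : Ω → ℝ} (hf : AEStronglyMeasurable f η) (t : ℕ) :
    AEStronglyMeasurable (trunc t f) η :=
  hf.indicator₀ (nullMeasurableSet_le aemeasurable_const hf.aemeasurable.abs).compl

theorem memLp_trunc [IsFiniteMeasure η] {f : Ω → ℝ} (hf : AEStronglyMeasurable f η) (t : ℕ)
    (p : ℝ≥0∞) : MemLp (trunc t f) p η :=
  MemLp.of_bound (aestronglyMeasurable_trunc hf t) t (Eventually.of_forall (abs_trunc_le t f))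

theorem exists_eLpNorm_sub_trunc_le {g : ℕ → Ω → ℝ} (hg : UniformIntegrable g 1 η) {ε : ℝ}
    (hε : 0 < ε) : ∃ t, ∀ n, eLpNorm (g n - trunc t (g n)) 1 η ≤ ENNReal.ofReal ε := by
  obtain ⟨C, hC⟩ := hg.spec one_ne_zero ENNReal.one_ne_top hε
  refine ⟨⌈C⌉₊, fun n => le_trans (eLpNorm_mono fun ω => ?_) (hC n)⟩
  rw [sub_trunc]
  refine norm_indicator_le_of_subset (fun ω hω => ?_) _ _
  have hCω : (C : ℝ) ≤ ‖g n ω‖ := (NNReal.coe_le_coe.2 (Nat.le_ceil C)).trans hω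
  exact hCω

theorem eLpNorm_one_eq_ofReal_integral_abs {f : Ω → ℝ} (hf : Integrable f η) :
    eLpNorm f 1 η = ENNReal.ofReal (∫ ω, |f ω| ∂η) := by
  rw [eLpNorm_one_eq_lintegral_enorm, ← ofReal_integral_norm_eq_lintegral_enorm hf]
  rfl

theorem integral_abs_le_of_forall_abs_setIntegral_le {f : Ω → ℝ} (hf : Integrable f η) {c : ℝ}
    (hc : ∀ A, MeasurableSet A → |∫ ω in A, f ω ∂η| ≤ c) : ∫ ω, |f ω| ∂η ≤ 2 * c := by
  obtain ⟨f', hf', hff'⟩ := hf.aestronglyMeasurable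
  let A : Set Ω := {ω | 0 ≤ f' ω}
  have hA : MeasurableSet A := measurableSet_le measurable_const hf'.measurable
  have habs : (fun ω => |f ω|) =ᵐ[η] fun ω => A.indicator f ω - Aᶜ.indicator f ω := by
    filter_upwards [hff'] with ω hω
    by_cases h : 0 ≤ f' ω
    · simp [A, h, hω]
    · simp [A, h, hω, abs_of_neg (not_le.1 h)]
  rw [integral_congr_ae habs, integral_sub (hf.indicator hA) (hf.indicator hA.compl),
    integral_indicator hA, integral_indicator hA.compl]
  linarith [(abs_le.1 (hc A hA)).2, (abs_le.1 (hc Aᶜ hA.compl)).1]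

theorem eLpNorm_cesaroMean_le {u : ℕ → Ω → ℝ} (hu : ∀ k, AEStronglyMeasurable (u k) η)
    {c : ℝ≥0∞} (hc : ∀ k, eLpNorm (u k) 1 η ≤ c) (n : ℕ) :
    eLpNorm (cesaroMean u n) 1 η ≤ c := by
  let s : Set (Ω → ℝ) := {f | AEStronglyMeasurable f η ∧ eLpNorm f 1 η ≤ c}
  have hs : Convex ℝ s := fun f hf g hg a b ha hb hab => by
    refine ⟨(hf.1.const_smul a).add (hg.1.const_smul b), ?_⟩
    calc eLpNorm (a • f + b • g) 1 η ≤ eLpNorm (a • f) 1 η + eLpNorm (b • g) 1 η :=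
          eLpNorm_add_le (hf.1.const_smul a) (hg.1.const_smul b) le_rfl
      _ ≤ ENNReal.ofReal a * c + ENNReal.ofReal b * c := by
          rw [eLpNorm_const_smul, eLpNorm_const_smul, Real.enorm_of_nonneg ha,
            Real.enorm_of_nonneg hb]
          gcongr
          exacts [hf.2, hg.2]
      _ = c := by rw [← add_mul, ← ENNReal.ofReal_add ha hb, hab, ENNReal.ofReal_one, one_mul]
  exact (cesaroMean_mem hs ⟨aestronglyMeasurable_const, by simp⟩
    (fun k _ => ⟨hu k, hc k⟩ : ∀ k < n, u k ∈ s)).2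

theorem aestronglyMeasurable_cesaroMean {u : ℕ → Ω → ℝ}
    (hu : ∀ k, AEStronglyMeasurable (u k) η) (n : ℕ) : AEStronglyMeasurable (cesaroMean u n) η :=
  (Finset.aestronglyMeasurable_sum _ fun k _ => hu k).const_smul _

theorem eLpNorm_cesaroMean_le_add {g u : ℕ → Ω → ℝ} (hg : ∀ k, AEStronglyMeasurable (g k) η)
    (hu : ∀ k, AEStronglyMeasurable (u k) η) {v : Ω → ℝ} (hv : AEStronglyMeasurable v η)
    {c : ℝ≥0∞} (hc : ∀ k, eLpNorm (g k - u k) 1 η ≤ c) (n : ℕ) :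
    eLpNorm (cesaroMean g n) 1 η ≤
      c + (eLpNorm (cesaroMean u n - v) 1 η + eLpNorm v 1 η) := by
  have hgu : ∀ k, AEStronglyMeasurable (g k - u k) η := fun k => (hg k).sub (hu k)
  have hum : AEStronglyMeasurable (cesaroMean u n) η := aestronglyMeasurable_cesaroMean hu n
  calc eLpNorm (cesaroMean g n) 1 η
      = eLpNorm (cesaroMean (fun k => g k - u k) n + (cesaroMean u n - v + v)) 1 η := by
        rw [cesaroMean_sub, sub_add_cancel, sub_add_cancel]
    _ ≤ eLpNorm (cesaroMean (fun k => g k - u k) n) 1 η +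
        eLpNorm (cesaroMean u n - v + v) 1 η :=
        eLpNorm_add_le (aestronglyMeasurable_cesaroMean hgu n) ((hum.sub hv).add hv) le_rfl
    _ ≤ c + (eLpNorm (cesaroMean u n - v) 1 η + eLpNorm v 1 η) :=
        add_le_add (eLpNorm_cesaroMean_le hgu hc n) (eLpNorm_add_le (hum.sub hv) hv le_rfl)

theorem coeFn_cesaroMean_toLp {u : ℕ → Ω → ℝ} {p : ℝ≥0∞} (hu : ∀ k, MemLp (u k) p η) (n : ℕ) :
    ⇑(cesaroMean (fun k => (hu k).toLp (u k)) n) =ᵐ[η] cesaroMean u n := by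
  have hterms : ∀ᵐ ω ∂η, ∀ k, (hu k).toLp (u k) ω = u k ω :=
    ae_all_iff.2 fun k => (hu k).coeFn_toLp
  filter_upwards [Lp.coeFn_smul (n : ℝ)⁻¹ (∑ k ∈ Finset.range n, (hu k).toLp (u k)),
    Lp.coeFn_finsetSum (Finset.range n) fun k => (hu k).toLp (u k), hterms] with ω hsmul hsum hω
  rw [cesaroMean, hsmul, Pi.smul_apply, hsum]
  simp only [cesaroMean, Pi.smul_apply, Finset.sum_apply, hω]

theorem tendsto_eLpNorm_one_sub_of_tendsto_L2 [IsFiniteMeasure η] {F : ℕ → Lp ℝ 2 η}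
    {v : Lp ℝ 2 η} (hF : Tendsto F atTop (𝓝 v)) :
    Tendsto (fun n => eLpNorm (F n - v : Ω → ℝ) 1 η) atTop (𝓝 0) := by
  have hL2 := (Lp.tendsto_Lp_iff_tendsto_eLpNorm' F v).1 hF
  have hle := fun n => eLpNorm_le_eLpNorm_mul_rpow_measure_univ (p := 1) one_le_two
    ((Lp.aestronglyMeasurable (F n)).sub (Lp.aestronglyMeasurable v))
  refine tendsto_of_tendsto_of_tendsto_of_le_of_le tendsto_const_nhds ?_ (fun _ => zero_le) hle
  simpa using ENNReal.Tendsto.mul_const hL2 (Or.inr (by finiteness))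

theorem eLpNorm_weak_limit_le [IsFiniteMeasure η] {g u : ℕ → Ω → ℝ}
    (hg : ∀ n, Integrable (g n) η)
    (hlim : ∀ A, MeasurableSet A → Tendsto (fun n => ∫ ω in A, g n ω ∂η) atTop (𝓝 0))
    (hu : ∀ n, MemLp (u n) 2 η) {c : ℝ} (hc : 0 ≤ c)
    (hgu : ∀ n, eLpNorm (g n - u n) 1 η ≤ ENNReal.ofReal c) {v : Lp ℝ 2 η}
    (hv : ∀ x : Lp ℝ 2 η, Tendsto (fun n => inner ℝ ((hu n).toLp (u n)) x)
      (hyperfilter ℕ : Filter ℕ) (𝓝 (inner ℝ v x))) :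
    eLpNorm v 1 η ≤ ENNReal.ofReal (2 * c) := by
  have hvi : Integrable v η := (Lp.memLp v).integrable one_le_two
  have hui : ∀ n, Integrable (u n) η := fun n => (hu n).integrable one_le_two
  rw [eLpNorm_one_eq_ofReal_integral_abs hvi]
  refine ENNReal.ofReal_le_ofReal
    (integral_abs_le_of_forall_abs_setIntegral_le hvi fun A hA => ?_)
  have hset : ∀ f : Lp ℝ 2 η,
      inner ℝ f (indicatorConstLp 2 hA (measure_ne_top η A) 1) = ∫ ω in A, f ω ∂η := fun f => by
    rw [real_inner_comm, L2.inner_indicatorConstLp_one]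
  have hA_lim := (hv (indicatorConstLp 2 hA (measure_ne_top η A) 1)).sub
    ((hlim A hA).mono_left Nat.hyperfilter_le_atTop)
  rw [hset, sub_zero] at hA_lim
  refine le_of_tendsto hA_lim.abs (Eventually.of_forall fun n => ?_)
  rw [hset, setIntegral_congr_ae hA ((hu n).coeFn_toLp.mono fun ω hω _ => hω),
    ← integral_sub (hui n).integrableOn (hg n).integrableOn]
  calc |∫ ω in A, (u n ω - g n ω) ∂η| ≤ ∫ ω in A, |u n ω - g n ω| ∂η :=
        abs_integral_le_integral_abs
    _ ≤ ∫ ω, |u n ω - g n ω| ∂η := setIntegral_le_integral ((hui n).sub (hg n)).abs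
        (Eventually.of_forall fun _ => abs_nonneg _)
    _ = ∫ ω, |(g n - u n) ω| ∂η := by simp only [Pi.sub_apply, abs_sub_comm]
    _ ≤ c := by
        rw [← ENNReal.ofReal_le_ofReal_iff hc,
          ← eLpNorm_one_eq_ofReal_integral_abs ((hg n).sub (hui n))]
        exact hgu n

/- An `L¹` version of the Banach-Saks theorem: truncations live in `L²`, where almost
orthogonality applies, and the truncation errors are uniformly small. -/
theorem exists_subseq_tendsto_eLpNorm_cesaroMean [IsFiniteMeasure η] {g : ℕ → Ω → ℝ}
    (hg : UniformIntegrable g 1 η)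
    (hlim : ∀ A, MeasurableSet A → Tendsto (fun n => ∫ ω in A, g n ω ∂η) atTop (𝓝 0)) :
    ∃ σ : ℕ → ℕ, StrictMono σ ∧ ∀ τ : ℕ → ℕ, StrictMono τ →
      Tendsto (fun n => eLpNorm (cesaroMean (fun k => g (σ (τ k))) n) 1 η) atTop (𝓝 0) := by
  have hmem : ∀ t n, MemLp (trunc t (g n)) 2 η := fun t n =>
    memLp_trunc (hg.aestronglyMeasurable n) t 2
  obtain ⟨v, hv, σ, hσ, hces⟩ := exists_subseq_tendsto_cesaroMean
    (a := fun t n => (hmem t n).toLp _)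
    fun t n => Lp.norm_le_of_ae_bound (Nat.cast_nonneg t)
      ((hmem t n).coeFn_toLp.mono fun ω hω => hω ▸ abs_trunc_le t (g n) ω)
  refine ⟨σ, hσ, fun τ hτ => ENNReal.tendsto_nhds_zero.2 fun ε hε => ?_⟩
  obtain ⟨c, hc, hcε⟩ : ∃ c : ℝ, 0 < c ∧ ENNReal.ofReal c + (ENNReal.ofReal c +
      ENNReal.ofReal (2 * c)) ≤ ε := by
    obtain ⟨c, -, hc, hcε⟩ := ENNReal.lt_iff_exists_real_btwn.1 hε
    rw [ENNReal.ofReal_pos] at hc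
    refine ⟨c / 4, by positivity, le_of_eq_of_le ?_ hcε.le⟩
    rw [← ENNReal.ofReal_add (by positivity) (by positivity),
      ← ENNReal.ofReal_add (by positivity) (by positivity)]
    ring_nf
  obtain ⟨t, ht⟩ := exists_eLpNorm_sub_trunc_le hg hc
  have hvt := eLpNorm_weak_limit_le (fun n => memLp_one_iff_integrable.1 (hg.memLp n)) hlim
    (hmem t) hc.le ht (hv t)
  filter_upwards [(tendsto_eLpNorm_one_sub_of_tendsto_L2 (hces τ hτ t)).eventually_le_const
    (ENNReal.ofReal_pos.2 hc)] with n hn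
  rw [eLpNorm_congr_ae
    ((coeFn_cesaroMean_toLp (fun k => hmem t (σ (τ k))) n).sub (ae_eq_refl (v t)))] at hn
  calc eLpNorm (cesaroMean (fun k => g (σ (τ k))) n) 1 η ≤ _ :=
        eLpNorm_cesaroMean_le_add (fun k => hg.aestronglyMeasurable _)
          (fun k => (hmem t (σ (τ k))).aestronglyMeasurable) (Lp.aestronglyMeasurable (v t))
          (fun k => ht _) n
    _ ≤ _ := by gcongr
    _ ≤ ε := hcε

end UniformlyIntegrable

/-! ### Finite measures -/

section FiniteMeasure

variable {η : Measure Ω}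

theorem exists_measure_lt_lt [IsFiniteMeasure η] {f : Ω → ℝ} (hf : AEMeasurable f η) {δ : ℝ}
    (hδ : 0 < δ) : ∃ R : ℕ, η {ω | (R : ℝ) < f ω} < ENNReal.ofReal δ := by
  have hinter : ⋂ n : ℕ, {ω | (n : ℝ) < f ω} = ∅ :=
    Set.iInter_eq_empty_iff.2 fun ω => (exists_nat_ge (f ω)).imp fun _ => not_lt.2
  have htendsto := tendsto_measure_iInter_atTop (μ := η) (s := fun n : ℕ => {ω | (n : ℝ) < f ω})
    (fun n => nullMeasurableSet_lt aemeasurable_const hf)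
    (fun a b hab ω (hω : (b : ℝ) < f ω) => (Nat.cast_le.2 hab).trans_lt hω)
    ⟨0, measure_ne_top _ _⟩
  rw [hinter, measure_empty] at htendsto
  exact (htendsto.eventually_lt_const (ENNReal.ofReal_pos.2 hδ)).exists

theorem exists_measure_pos_and_lt_lt [IsFiniteMeasure η] {f : Ω → ℝ} (hf : AEMeasurable f η)
    {δ : ℝ} (hδ : 0 < δ) :
    ∃ θ : ℝ, 0 < θ ∧ η {ω | 0 < f ω ∧ f ω < θ} < ENNReal.ofReal δ := by
  obtain ⟨R, hR⟩ := exists_measure_lt_lt hf.inv hδ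
  refine ⟨((R : ℝ) + 1)⁻¹, by positivity, (measure_mono fun ω hω => ?_).trans_lt hR⟩
  have hinv : (R : ℝ) + 1 < (f ω)⁻¹ := (lt_inv_comm₀ (by positivity) hω.1).2 hω.2
  exact (lt_add_one _).trans hinv

theorem tendsto_measure_of_pairwise_aedisjoint [IsFiniteMeasure η] {E : ℕ → Set Ω}
    (hE : ∀ n, NullMeasurableSet (E n) η) (hd : Pairwise fun i j => AEDisjoint η (E i) (E j)) :
    Tendsto (fun n => η (E n)) atTop (𝓝 0) :=
  ENNReal.tendsto_atTop_zero_of_tsum_ne_top <|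
    ne_top_of_le_ne_top (measure_ne_top η _) (tsum_meas_le_meas_iUnion_of_disjoint₀ η hE hd)

theorem measure_iInter_biUnion_Ici_eq_zero {E : ℕ → Set Ω} (hE : ∑' n, η (E n) ≠ ∞) :
    η (⋂ n, ⋃ i ∈ Set.Ici n, E i) = 0 := by
  have h := measure_limsup_atTop_eq_zero hE
  rwa [limsup_eq_iInf_iSup_of_nat] at h

theorem antitone_biUnion_Ici {α : Type*} (E : ℕ → Set α) :
    Antitone fun n => ⋃ i ∈ Set.Ici n, E i :=
  fun _ _ h => Set.biUnion_subset_biUnion_left (Set.Ici_subset_Ici.2 h)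

/- Otherwise there are sets `A n` with `N (A n) > ε` and summable measures, and `N` stays above `ε`
along the unions of tails, which decrease to a null set. -/
theorem exists_forall_measure_lt_le {N : Set Ω → ℝ}
    (hmono : ∀ A C, MeasurableSet A → MeasurableSet C → A ⊆ C → N A ≤ N C)
    (hN : ∀ C : ℕ → Set Ω, (∀ n, MeasurableSet (C n)) → Antitone C → η (⋂ n, C n) = 0 →
      Tendsto (fun n => N (C n)) atTop (𝓝 0)) {ε : ℝ} (hε : 0 < ε) :
    ∃ δ : ℝ, 0 < δ ∧ ∀ A, MeasurableSet A → η A < ENNReal.ofReal δ → N A ≤ ε := by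
  by_contra! hcon
  choose A hA hAδ hAε using fun n : ℕ => hcon ((1 / 2) ^ n) (by positivity)
  have hsum : ∑' n, η (A n) ≠ ∞ :=
    ne_top_of_le_ne_top (ENNReal.ofReal_tsum_of_nonneg (fun n => by positivity)
      summable_geometric_two ▸ ENNReal.ofReal_ne_top) (ENNReal.tsum_le_tsum fun n => (hAδ n).le)
  have htail : ∀ n, MeasurableSet (⋃ i ∈ Set.Ici n, A i) := fun n =>
    MeasurableSet.biUnion (Set.to_countable _) fun i _ => hA i
  obtain ⟨n, hn⟩ := ((hN _ htail (antitone_biUnion_Ici A)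
    (measure_iInter_biUnion_Ici_eq_zero hsum)).eventually_lt_const hε).exists
  exact (hAε n).not_ge <| (hmono _ _ (hA n) (htail n)
    (Set.subset_biUnion_of_mem (u := A) Set.self_mem_Ici)).trans hn.le

theorem card_mul_le_of_sum_indicator_le [IsFiniteMeasure η] {V : ℕ → Set Ω} {F : Ω → ℝ}
    {R c d : ℝ} {K : ℕ} (hF : AEMeasurable F η) (hc : 0 ≤ c) (hR : 0 ≤ R)
    (hV : ∀ k < K, NullMeasurableSet (V k) η) (hVd : ∀ k < K, 2 * d ≤ η.real (V k))
    (hFR : η.real {ω | R < F ω} ≤ d)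
    (hsum : ∀ᵐ ω ∂η, ∑ k ∈ Finset.range K, (V k).indicator (fun _ => c) ω ≤ F ω) :
    K * (d * c) ≤ R * η.real Set.univ := by
  let W : Set Ω := {ω | F ω ≤ R}
  have hW : NullMeasurableSet W η := nullMeasurableSet_le hF aemeasurable_const
  have hV' : ∀ k < K, NullMeasurableSet (V k) (η.restrict W) := fun k hk =>
    (hV k hk).mono_ac Measure.restrict_le_self.absolutelyContinuous
  have hVW : ∀ k < K, d ≤ (η.restrict W).real (V k) := fun k hk => by
    have hcover : η.real (V k) ≤ η.real (V k ∩ W) + η.real {ω | R < F ω} :=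
      (measureReal_mono fun ω hω => (le_or_gt (F ω) R).imp (fun h => ⟨hω, h⟩) id).trans
        (measureReal_union_le _ _)
    rw [measureReal_restrict_apply₀ (hV' k hk)]
    linarith [hVd k hk]
  have hint : ∀ k ∈ Finset.range K, Integrable ((V k).indicator fun _ => c) (η.restrict W) :=
    fun k hk => (integrable_const c).indicator₀ (hV' k (Finset.mem_range.1 hk))
  calc K * (d * c) = ∑ _k ∈ Finset.range K, d * c := by simp
    _ ≤ ∑ k ∈ Finset.range K, ∫ ω in W, (V k).indicator (fun _ => c) ω ∂η := by
        refine Finset.sum_le_sum fun k hk => ?_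
        rw [integral_indicator₀ (hV' k (Finset.mem_range.1 hk)), setIntegral_const, smul_eq_mul]
        exact mul_le_mul_of_nonneg_right (hVW k (Finset.mem_range.1 hk)) hc
    _ = ∫ ω in W, ∑ k ∈ Finset.range K, (V k).indicator (fun _ => c) ω ∂η :=
        (integral_finsetSum _ hint).symm
    _ ≤ ∫ _ in W, R ∂η := by
        refine integral_mono_ae (integrable_finsetSum _ hint) (integrable_const R) ?_
        filter_upwards [ae_restrict_of_ae hsum, ae_restrict_mem₀ hW] with ω hω hωW
        exact hω.trans hωW
    _ = R * η.real W := by rw [setIntegral_const, smul_eq_mul, mul_comm]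
    _ ≤ R * η.real Set.univ :=
        mul_le_mul_of_nonneg_left (measureReal_mono (Set.subset_univ _)) hR

theorem card_mul_le_of_sum_le [IsFiniteMeasure η] {v : ℕ → Ω → ℝ} {F : Ω → ℝ} {R a d : ℝ} {K : ℕ}
    (hF : AEMeasurable F η) (hv : ∀ k, AEMeasurable (v k) η) (hv0 : ∀ k, 0 ≤ᵐ[η] v k) (ha : 0 ≤ a)
    (hR : 0 ≤ R) (hvd : ∀ k < K, 2 * d ≤ η.real {ω | a ≤ v k ω})
    (hFR : η.real {ω | R < F ω} ≤ d) (hsum : ∀ᵐ ω ∂η, ∑ k ∈ Finset.range K, v k ω ≤ F ω) :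
    K * (d * a) ≤ R * η.real Set.univ := by
  refine card_mul_le_of_sum_indicator_le hF ha hR
    (fun k _ => nullMeasurableSet_le aemeasurable_const (hv k)) hvd hFR ?_
  filter_upwards [hsum, ae_all_iff.2 hv0] with ω hω hω0
  refine (Finset.sum_le_sum fun k _ => ?_).trans hω
  exact Set.indicator_apply_le' (fun h => h) fun _ => hω0 k

end FiniteMeasure

/-! ### Banach function spaces -/

/- A functional separating `T` from the open epigraph `{(x, t) | C ‖x‖ < t}` is a multiple of
`(x, t) ↦ ψ x - t`. -/
theorem exists_clm_le_of_pointedCone (T : PointedCone ℝ (X × ℝ)) {C : ℝ} (hC : 0 ≤ C)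
    (hT : ∀ p ∈ T, p.2 ≤ C * ‖p.1‖) :
    ∃ ψ : X →L[ℝ] ℝ, ‖ψ‖ ≤ C ∧ ∀ p ∈ T, p.2 ≤ ψ p.1 := by
  let U : Set (X × ℝ) := {p | C * ‖p.1‖ < p.2}
  have hU : Convex ℝ U := by
    simpa [U] using (convexOn_univ_norm.smul hC : ConvexOn ℝ _ fun x : X => C • ‖x‖)
      |>.convex_strict_epigraph
  have hUopen : IsOpen U := isOpen_lt (continuous_const.mul continuous_fst.norm) continuous_snd
  have hUT : Disjoint U T := Set.disjoint_left.2 fun p hpU hpT => (hT p hpT).not_gt hpU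
  obtain ⟨F, u, hFU, hFT⟩ := geometric_hahn_banach_open hU hUopen T.convex hUT
  have hu : u ≤ 0 := (hFT 0 T.zero_mem).trans_eq (map_zero F)
  have hFT0 : ∀ p ∈ T, 0 ≤ F p := fun p hp => by
    by_contra! hneg
    have hscale := hFT _ (T.smul_mem (div_nonneg_of_nonpos (by linarith : u - 1 ≤ 0) hneg.le) hp)
    rw [map_smul, smul_eq_mul, div_mul_cancel₀ _ hneg.ne] at hscale
    linarith
  have hF : ∀ x t, F (x, t) = F (x, 0) - t * -F (0, 1) := fun x t => by
    rw [mul_neg, sub_neg_eq_add, ← smul_eq_mul, ← map_smul, ← map_add]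
    simp
  have hr : 0 < -F (0, 1) := neg_pos.2 ((hFU (0, 1) (by simp [U])).trans_le hu)
  let ψ : X →L[ℝ] ℝ := (-F (0, 1))⁻¹ • F.comp (ContinuousLinearMap.inl ℝ X ℝ)
  have hψ : ∀ x, ψ x = F (x, 0) / -F (0, 1) := fun x => inv_mul_eq_div _ _
  have hψC : ∀ x, ψ x ≤ C * ‖x‖ := fun x => le_of_forall_gt fun t ht => by
    have := (hFU (x, t) ht).trans_le hu
    rw [hF, sub_neg] at this
    rwa [hψ, div_lt_iff₀ hr]
  refine ⟨ψ, ψ.opNorm_le_bound hC fun x => abs_le'.2 ⟨hψC x, ?_⟩, fun p hp => ?_⟩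
  · simpa using hψC (-x)
  · have := hFT0 p hp
    rw [hF, sub_nonneg] at this
    rwa [hψ, le_div_iff₀ hr]

namespace BFS

section Lattice

variable (B : BFS S μ X)

theorem eq_of_ae_eq {x y : X} (h : B.J x =ᵐ[μ] B.J y) : x = y := by
  refine sub_eq_zero.1 (B.eq_zero _ ?_)
  rw [map_sub]
  exact h.sub_eq

theorem norm_le_norm {x y : X} (h : ∀ᵐ s ∂μ, |B.J x s| ≤ |B.J y s|) : ‖x‖ ≤ ‖y‖ := by
  obtain ⟨z, hz, hzy⟩ := B.ideal y (B.J x) (B.aemeasurable x) h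
  rwa [B.eq_of_ae_eq hz] at hzy

theorem exists_abs (x : X) : ∃ y, (B.J y =ᵐ[μ] fun s => |B.J x s|) ∧ ‖y‖ ≤ ‖x‖ :=
  B.ideal x _ (B.aemeasurable x).abs (by simp)

theorem nullMeasurableSet_support (x : X) : NullMeasurableSet (Function.support (B.J x)) μ :=
  (B.aemeasurable x).nullMeasurable (measurableSet_singleton 0).compl

theorem norm_le_add₃ {x a b c : X}
    (h : ∀ᵐ s ∂μ, |B.J x s| ≤ |B.J a s| + |B.J b s| + |B.J c s|) :
    ‖x‖ ≤ ‖a‖ + ‖b‖ + ‖c‖ := by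
  obtain ⟨a', ha, hna⟩ := B.exists_abs a
  obtain ⟨b', hb, hnb⟩ := B.exists_abs b
  obtain ⟨c', hc, hnc⟩ := B.exists_abs c
  have hx : ‖x‖ ≤ ‖a' + b' + c'‖ := by
    refine B.norm_le_norm ?_
    filter_upwards [h, ha, hb, hc] with s hs hsa hsb hsc
    simp only [map_add, Pi.add_apply, hsa, hsb, hsc]
    exact hs.trans (le_abs_self _)
  exact hx.trans (norm_add₃_le.trans (by gcongr))

theorem isClosed_setOf_nonneg : IsClosed {x : X | 0 ≤ᵐ[μ] B.J x} := by
  refine isClosed_of_closure_subset fun x hx => ?_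
  obtain ⟨y, hy, -⟩ := B.ideal x (fun s => max (-(B.J x s)) 0)
    ((B.aemeasurable x).neg.max aemeasurable_const) (Eventually.of_forall fun s => by
      rw [abs_of_nonneg (le_max_right _ _)]
      exact max_le (neg_le_abs _) (abs_nonneg _))
  have hdist : ∀ u : X, 0 ≤ᵐ[μ] B.J u → ‖y‖ ≤ ‖x - u‖ := fun u hu => by
    refine B.norm_le_norm ?_
    filter_upwards [hu, hy] with s hus hys
    rw [hys, abs_of_nonneg (le_max_right _ _), map_sub, Pi.sub_apply]
    refine max_le ?_ (abs_nonneg _)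
    linarith [neg_abs_le (B.J x s - B.J u s), show 0 ≤ B.J u s from hus]
  have hy0 : y = 0 := norm_le_zero_iff.1 <| le_of_forall_pos_le_add fun ε hε => by
    obtain ⟨u, hu, hxu⟩ := Metric.mem_closure_iff.1 hx ε hε
    rw [zero_add]
    exact (hdist u hu).trans (dist_eq_norm x u ▸ hxu.le)
  filter_upwards [hy] with s hs
  rw [hy0, map_zero, Pi.zero_apply] at hs
  exact neg_nonpos.1 ((le_max_left _ _).trans hs.ge)

theorem J_le_J_tsum {a : ℕ → X} (ha : Summable a) (hpos : ∀ i, 0 ≤ᵐ[μ] B.J (a i)) (j : ℕ) :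
    B.J (a j) ≤ᵐ[μ] B.J (∑' i, a i) := by
  have hpartial : ∀ᶠ n in atTop, ∑ i ∈ Finset.range n, a i - a j ∈ {x : X | 0 ≤ᵐ[μ] B.J x} := by
    filter_upwards [eventually_gt_atTop j] with n hn
    filter_upwards [ae_all_iff.2 hpos] with s hs
    simp only [map_sub, map_sum, Pi.sub_apply, Finset.sum_apply, Pi.zero_apply, sub_nonneg]
    exact Finset.single_le_sum (f := fun i => B.J (a i) s) (fun i _ => hs i)
      (Finset.mem_range.2 hn)
  have hsub := B.isClosed_setOf_nonneg.mem_of_tendsto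
    (ha.hasSum.tendsto_sum_nat.sub_const (a j)) hpartial
  filter_upwards [hsub] with s hs
  simpa only [map_sub, Pi.sub_apply, Pi.zero_apply, sub_nonneg] using hs

/- Bounded sets are bounded in measure: if `μ {4 ^ j < |x j|} > δ` for bounded `x j`, then
`∑ 2⁻ʲ |x j|` would exceed every `2 ^ j` on a set of measure `> δ`. -/
theorem exists_forall_measure_lt_abs_le [CompleteSpace X] [IsFiniteMeasure μ] (C : ℝ) {δ : ℝ}
    (hδ : 0 < δ) :
    ∃ R : ℝ, 0 < R ∧ ∀ x : X, ‖x‖ ≤ C → μ {s | R < |B.J x s|} ≤ ENNReal.ofReal δ := by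
  by_contra! hcon
  choose x hxC hx using fun j : ℕ => hcon ((4 : ℝ) ^ j) (by positivity)
  choose y hy hyx using fun j : ℕ => B.exists_abs (x j)
  let a : ℕ → X := fun j => (1 / 2 : ℝ) ^ j • y j
  have ha : Summable a := by
    refine Summable.of_norm_bounded (summable_geometric_two.mul_right C) fun j => ?_
    rw [norm_smul, Real.norm_of_nonneg (by positivity)]
    gcongr
    exact (hyx j).trans (hxC j)
  have hJa : ∀ j, B.J (a j) =ᵐ[μ] fun s => (1 / 2) ^ j * |B.J (x j) s| := fun j => by
    filter_upwards [hy j] with s hs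
    simp only [a, map_smul, Pi.smul_apply, smul_eq_mul, hs]
  have hle := B.J_le_J_tsum ha fun j => (hJa j).mono fun s hs => by
    rw [hs, Pi.zero_apply]
    positivity
  obtain ⟨R, hR⟩ := exists_measure_lt_lt (B.aemeasurable (∑' i, a i)) hδ
  refine ((hx R).trans_le (measure_mono_ae ?_)).not_gt hR
  filter_upwards [hle R, hJa R] with s hs hsa (hsR : 4 ^ R < |B.J (x R) s|)
  calc (R : ℝ) < 2 ^ R := mod_cast R.lt_two_pow_self
    _ = (1 / 2) ^ R * 4 ^ R := by rw [← mul_pow]; norm_num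
    _ ≤ (1 / 2) ^ R * |B.J (x R) s| := by gcongr
    _ ≤ B.J (∑' i, a i) s := hsa ▸ hs

end Lattice

section Restrict

variable (B : BFS S μ X) {A : Set S} {K : Set X}

open Classical in
/-- The band projection `χ_A x`. Elements of `X` are identified with functions only through `J`,
so `χ_A x` has to be chosen; the value is `0` if `A` is so bad that there is no such element. -/
def restrict (A : Set S) (x : X) : X :=
  if h : ∃ y, B.J y =ᵐ[μ] A.indicator (B.J x) then h.choose else 0

theorem J_restrict (hA : NullMeasurableSet A μ) (x : X) :
    B.J (B.restrict A x) =ᵐ[μ] A.indicator (B.J x) := by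
  have hex : ∃ y, B.J y =ᵐ[μ] A.indicator (B.J x) :=
    (B.ideal x _ ((B.aemeasurable x).indicator₀ hA) (Eventually.of_forall fun s => by
      simpa only [Real.norm_eq_abs] using norm_indicator_le_norm_self (B.J x) s)).imp
      fun _ => And.left
  rw [restrict, dif_pos hex]
  exact hex.choose_spec

variable {B} in
theorem UnifAC.exists_norm_restrict_le (hK : B.UnifAC K) {ε : ℝ} (hε : 0 < ε) :
    ∃ δ : ℝ, 0 < δ ∧ ∀ A, NullMeasurableSet A μ → μ A < ENNReal.ofReal δ →
      ∀ x ∈ K, ‖B.restrict A x‖ ≤ ε := by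
  obtain ⟨δ, hδ, hK'⟩ := hK ε hε
  refine ⟨δ, hδ, fun A hA hAδ x hx => ?_⟩
  obtain ⟨A', -, hA'm, hA'⟩ := hA.exists_measurable_superset_ae_eq
  exact hK' A' hA'm (measure_congr hA' ▸ hAδ) x hx _
    ((B.J_restrict hA x).trans (indicator_ae_eq_of_ae_eq_set hA'.symm))

end Restrict

section Slices

variable {B : BFS S μ X} {e : X} {ε : ℝ}

theorem tendsto_measure_support_of_disjoint [IsFiniteMeasure μ] {H : ℕ → X}
    (hH : ∀ i j, i ≠ j → (fun s => B.J (H i) s * B.J (H j) s) =ᵐ[μ] 0) :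
    Tendsto (fun n => μ (Function.support (B.J (H n)))) atTop (𝓝 0) := by
  refine tendsto_measure_of_pairwise_aedisjoint
    (fun n => B.nullMeasurableSet_support (H n)) fun i j hij => ?_
  have hsupport : Function.support (B.J (H i)) ∩ Function.support (B.J (H j)) =
      Function.support fun s => B.J (H i) s * B.J (H j) s := (Function.support_mul _ _).symm
  exact (congrArg μ hsupport).trans (hH i j hij)

theorem norm_le_restrict_add {u G H : X} {c θ : ℝ} (he : 0 ≤ᵐ[μ] B.J e) (hc : 0 ≤ c)
    (hθ : 0 ≤ θ) (hu : 0 ≤ᵐ[μ] B.J u) (hue : B.J u ≤ᵐ[μ] B.J (c • e))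
    (huGH : B.J u ≤ᵐ[μ] B.J (G + H)) :
    ‖u‖ ≤ c * ‖B.restrict (Function.support (B.J H)) e‖ +
      ‖B.restrict {s | θ * B.J e s < B.J u s} G‖ + θ * ‖e‖ := by
  have hE := B.nullMeasurableSet_support H
  have hV := nullMeasurableSet_lt ((B.aemeasurable e).const_mul θ) (B.aemeasurable u)
  rw [← Real.norm_of_nonneg hc, ← Real.norm_of_nonneg hθ, ← norm_smul, ← norm_smul,
    Real.norm_of_nonneg hθ]
  refine B.norm_le_add₃ ?_
  filter_upwards [he, hu, hue, huGH, B.J_restrict hE e, B.J_restrict hV G]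
    with s hes hus hues huGHs hsE hsV
  simp only [map_smul, map_add, Pi.add_apply, Pi.smul_apply, smul_eq_mul, Pi.zero_apply]
    at hes hus hues huGHs ⊢
  rw [hsE, hsV, abs_of_nonneg hus]
  by_cases hsH : B.J H s = 0
  · by_cases hsu : θ * B.J e s < B.J u s
    · rw [Set.indicator_of_mem (show s ∈ {s | θ * B.J e s < B.J u s} from hsu)]
      rw [hsH, add_zero] at huGHs
      linarith [le_abs_self (B.J G s), abs_nonneg (θ * B.J e s),
        abs_nonneg (c * (Function.support (B.J H)).indicator (B.J e) s)]
    · linarith [le_abs_self (θ * B.J e s), abs_nonneg (c * (Function.support (B.J H)).indicator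
        (B.J e) s), abs_nonneg ({s | θ * B.J e s < B.J u s}.indicator (B.J G) s)]
  · rw [Set.indicator_of_mem (Function.mem_support.2 hsH)]
    linarith [le_abs_self (c * B.J e s), abs_nonneg (θ * B.J e s),
      abs_nonneg ({s | θ * B.J e s < B.J u s}.indicator (B.J G) s)]

theorem measureReal_setOf_lt_le [IsFiniteMeasure μ] {u : X} {c θ t : ℝ} (hθ : 0 ≤ θ)
    (he : 0 ≤ᵐ[μ] B.J e) (hue : B.J u ≤ᵐ[μ] B.J (c • e)) :
    μ.real {s | θ * B.J e s < B.J u s} ≤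
      μ.real {s | 0 < B.J e s ∧ B.J e s < t} + μ.real {s | θ * t ≤ B.J u s} := by
  refine le_trans (ENNReal.toReal_mono (measure_ne_top _ _) (measure_mono_ae ?_))
    (measureReal_union_le _ _)
  filter_upwards [he, hue] with s hes hues (hlt : θ * B.J e s < B.J u s)
  rw [map_smul, Pi.smul_apply, smul_eq_mul] at hues
  rcases hes.eq_or_lt with h0 | hpos
  · rw [Pi.zero_apply] at h0
    rw [← h0, mul_zero] at hlt hues
    exact absurd hlt hues.not_gt
  · refine (lt_or_ge (B.J e s) t).imp (fun h => ⟨hpos, h⟩) fun h => ?_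
    exact (mul_le_mul_of_nonneg_left h hθ).trans hlt.le

/- Off the support of `H n`, which becomes small, `u ≤ G n`; since `G` is equi-integrable, a `u` of
large norm cannot be below `θ • e` outside a small set. -/
theorem exists_eventually_le_measureReal [IsFiniteMeasure μ] {G H : ℕ → X} (he : 0 ≤ᵐ[μ] B.J e)
    (heac : B.UnifAC {e}) (hG : B.UnifAC (Set.range G))
    (hH : ∀ i j, i ≠ j → (fun s => B.J (H i) s * B.J (H j) s) =ᵐ[μ] 0) (hε : 0 < ε) :
    ∃ d a : ℝ, 0 < d ∧ 0 < a ∧ ∀ c : ℝ, 0 < c → ∀ᶠ n in atTop, ∀ u : X, 0 ≤ᵐ[μ] B.J u →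
      B.J u ≤ᵐ[μ] B.J (c • e) → B.J u ≤ᵐ[μ] B.J (G n + H n) → ε < ‖u‖ →
        d ≤ μ.real {s | a ≤ B.J u s} := by
  obtain ⟨d, hd, hGd⟩ := hG.exists_norm_restrict_le (show 0 < ε / 3 by positivity)
  obtain ⟨t, ht, htd⟩ := exists_measure_pos_and_lt_lt (B.aemeasurable e) (half_pos hd)
  obtain ⟨θ, hθ, hθe⟩ := exists_pos_mul_lt (show 0 < ε / 3 by positivity) ‖e‖
  refine ⟨d / 2, θ * t, half_pos hd, by positivity, fun c hc => ?_⟩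
  obtain ⟨d', hd', hed'⟩ := heac.exists_norm_restrict_le (show 0 < ε / 3 / c by positivity)
  filter_upwards [(tendsto_measure_support_of_disjoint hH).eventually_lt_const
    (ENNReal.ofReal_pos.2 hd')] with n hn u hu hue huGH hεu
  have hV : d ≤ μ.real {s | θ * B.J e s < B.J u s} := by
    by_contra! hlt
    have hesmall := (le_div_iff₀' hc).1 <| hed' _ (B.nullMeasurableSet_support (H n)) hn e rfl
    have hGsmall := hGd _
      (nullMeasurableSet_lt ((B.aemeasurable e).const_mul θ) (B.aemeasurable u))
      ((ENNReal.lt_ofReal_iff_toReal_lt (measure_ne_top _ _)).2 hlt) (G n) ⟨n, rfl⟩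
    linarith [norm_le_restrict_add he hc.le hθ.le hu hue huGH]
  have htd' : μ.real {s | 0 < B.J e s ∧ B.J e s < t} ≤ d / 2 :=
    ENNReal.toReal_le_of_le_ofReal (by positivity) htd.le
  linarith [measureReal_setOf_lt_le (t := t) hθ.le he hue]

theorem exists_eventually_exists_norm_le [CompleteSpace X] [IsFiniteMeasure μ] {G H : ℕ → X}
    {C : ℝ} {u : ℕ → ℕ → X} {c : ℕ → ℝ} (he : 0 ≤ᵐ[μ] B.J e) (heac : B.UnifAC {e})
    (hC : ∀ n, ‖G n + H n‖ ≤ C) (hG : B.UnifAC (Set.range G))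
    (hH : ∀ i j, i ≠ j → (fun s => B.J (H i) s * B.J (H j) s) =ᵐ[μ] 0)
    (hu : ∀ n k, 0 ≤ᵐ[μ] B.J (u n k)) (hue : ∀ n k, B.J (u n k) ≤ᵐ[μ] B.J (c k • e))
    (hsum : ∀ n K, B.J (∑ k ∈ Finset.range K, u n k) ≤ᵐ[μ] B.J (G n + H n)) (hε : 0 < ε) :
    ∃ K : ℕ, ∀ᶠ n in atTop, ∃ k < K, ‖u n k‖ ≤ ε := by
  obtain ⟨d, a, hd, ha, hlarge⟩ := exists_eventually_le_measureReal he heac hG hH hε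
  obtain ⟨R, hR, hRd⟩ := B.exists_forall_measure_lt_abs_le C (half_pos hd)
  obtain ⟨K, hK⟩ := exists_nat_gt (R * μ.real Set.univ / (d / 2 * a))
  rw [div_lt_iff₀ (by positivity)] at hK
  have hlargeK : ∀ᶠ n in atTop, ∀ k ∈ Finset.range K, ε < ‖u n k‖ →
      d ≤ μ.real {s | a ≤ B.J (u n k) s} := by
    refine (Filter.eventually_all_finset _).2 fun k _ => ?_
    filter_upwards [hlarge (|c k| + 1) (by positivity)] with n hn
    refine hn (u n k) (hu n k) ?_ ?_
    · filter_upwards [hue n k, he] with s hs hes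
      simp only [map_smul, Pi.smul_apply, smul_eq_mul] at hs ⊢
      exact hs.trans (mul_le_mul_of_nonneg_right (by linarith [le_abs_self (c k)]) hes)
    · filter_upwards [hsum n (k + 1), ae_all_iff.2 (hu n)] with s hs hus
      rw [map_sum, Finset.sum_apply] at hs
      exact (Finset.single_le_sum (f := fun k => B.J (u n k) s) (fun i _ => hus i)
        (Finset.self_mem_range_succ k)).trans hs
  refine ⟨K, ?_⟩
  filter_upwards [hlargeK] with n hn
  by_contra! hcon
  refine hK.not_ge (card_mul_le_of_sum_le (B.aemeasurable (G n + H n))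
    (fun k => B.aemeasurable (u n k)) (hu n) ha.le hR.le (fun k hk => ?_) ?_ ?_)
  · linarith [hn k (Finset.mem_range.2 hk) (hcon k hk)]
  · exact ENNReal.toReal_le_of_le_ofReal (half_pos hd).le <|
      (measure_mono fun s (hs : R < _) => hs.trans_le (le_abs_self _)).trans (hRd _ (hC n))
  · simpa only [EventuallyLE, map_sum, Finset.sum_apply] using hsum n K

end Slices

section Dual

variable (B : BFS S μ X)

theorem norm_tendsto_zero_of_antitone {v : ℕ → X} (hpos : ∀ n, 0 ≤ᵐ[μ] B.J (v n))
    (hanti : ∀ i j, i ≤ j → B.J (v j) ≤ᵐ[μ] B.J (v i))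
    (hweak : ∀ φ : X →L[ℝ] ℝ, Tendsto (fun n => φ (v n)) atTop (𝓝 0)) :
    Tendsto (fun n => ‖v n‖) atTop (𝓝 0) := by
  let W : Set X := {w | ∃ N, B.J (v N) ≤ᵐ[μ] B.J w}
  have hW : Convex ℝ W := by
    rintro w₁ ⟨N₁, h₁⟩ w₂ ⟨N₂, h₂⟩ a b ha hb hab
    refine ⟨max N₁ N₂, ?_⟩
    filter_upwards [h₁, h₂, hanti _ _ (le_max_left N₁ N₂), hanti _ _ (le_max_right N₁ N₂)]
      with s hs₁ hs₂ hsm₁ hsm₂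
    simp only [map_add, map_smul, Pi.add_apply, Pi.smul_apply, smul_eq_mul]
    calc B.J (v (max N₁ N₂)) s
        = a * B.J (v (max N₁ N₂)) s + b * B.J (v (max N₁ N₂)) s := by rw [← add_mul, hab, one_mul]
      _ ≤ a * B.J w₁ s + b * B.J w₂ s :=
        add_le_add (mul_le_mul_of_nonneg_left (hsm₁.trans hs₁) ha)
          (mul_le_mul_of_nonneg_left (hsm₂.trans hs₂) hb)
  have h0 : (0 : X) ∈ closure W := by
    by_contra h0
    obtain ⟨φ, u, hφ0, hφ⟩ := geometric_hahn_banach_point_closed hW.closure isClosed_closure h0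
    rw [map_zero] at hφ0
    exact hφ0.not_ge <| ge_of_tendsto' (hweak φ) fun n =>
      (hφ _ (subset_closure ⟨n, EventuallyLE.rfl⟩)).le
  refine Metric.tendsto_atTop.2 fun ε hε => ?_
  obtain ⟨w, ⟨N, hN⟩, hw⟩ := Metric.mem_closure_iff.1 h0 ε hε
  refine ⟨N, fun n hn => ?_⟩
  rw [dist_zero_left] at hw
  rw [dist_zero_right, norm_norm]
  refine (B.norm_le_norm ?_).trans_lt hw
  filter_upwards [hpos n, hanti N n hn, hN] with s hs hsN hsw
  rw [abs_of_nonneg hs]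
  exact (hsN.trans hsw).trans (le_abs_self _)

/-- A functional on a Banach function space is positive if it is nonnegative on the cone `X⁺`. -/
def IsPositive (φ : X →L[ℝ] ℝ) : Prop :=
  ∀ x, 0 ≤ᵐ[μ] B.J x → 0 ≤ φ x

theorem nonneg_of_forall_isPositive {x : X} (h : ∀ φ, B.IsPositive φ → 0 ≤ φ x) :
    0 ≤ᵐ[μ] B.J x := by
  let K : ProperCone ℝ X :=
    { carrier := {x | 0 ≤ᵐ[μ] B.J x}
      add_mem' := fun {x y} hx hy => by
        rw [Set.mem_ofPred_eq, map_add]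
        filter_upwards [hx, hy] with s hxs hys using add_nonneg hxs hys
      zero_mem' := by rw [Set.mem_ofPred_eq, map_zero]
      smul_mem' := fun c x hx => by
        change 0 ≤ᵐ[μ] B.J ((c : ℝ) • x)
        rw [map_smul]
        filter_upwards [hx] with s hs using mul_nonneg c.2 hs
      isClosed' := B.isClosed_setOf_nonneg }
  by_contra hx
  obtain ⟨φ, hφK, hφx⟩ := K.hyperplane_separation_point (x₀ := x) hx
  exact hφx.not_ge (h φ hφK)

theorem exists_forall_abs_apply_le (φ : X →L[ℝ] ℝ) :
    ∃ ψ : X →L[ℝ] ℝ, ‖ψ‖ ≤ ‖φ‖ ∧ ∀ x, 0 ≤ᵐ[μ] B.J x → |φ x| ≤ ψ x := by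
  let T : PointedCone ℝ (X × ℝ) :=
    { carrier := {p | ∃ y, (∀ᵐ s ∂μ, |B.J y s| ≤ B.J p.1 s) ∧ φ y = p.2}
      add_mem' := by
        rintro p q ⟨y, hy, hyp⟩ ⟨z, hz, hzq⟩
        refine ⟨y + z, ?_, by rw [map_add, hyp, hzq, Prod.snd_add]⟩
        filter_upwards [hy, hz] with s hys hzs
        rw [Prod.fst_add, map_add, map_add]
        exact (abs_add_le _ _).trans (add_le_add hys hzs)
      zero_mem' := ⟨0, by simp, by simp⟩
      smul_mem' := by
        rintro c p ⟨y, hy, hyp⟩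
        refine ⟨(c : ℝ) • y, ?_, by rw [map_smul, hyp]; rfl⟩
        filter_upwards [hy] with s hys
        change |B.J ((c : ℝ) • y) s| ≤ B.J ((c : ℝ) • p.1) s
        rw [map_smul, map_smul, Pi.smul_apply, Pi.smul_apply, smul_eq_mul, smul_eq_mul, abs_mul,
          abs_of_nonneg c.2]
        exact mul_le_mul_of_nonneg_left hys c.2 }
  obtain ⟨ψ, hψ, hψT⟩ := exists_clm_le_of_pointedCone T (norm_nonneg φ) <| by
    rintro p ⟨y, hy, hyp⟩
    refine hyp ▸ (le_abs_self _).trans ((φ.le_opNorm y).trans ?_)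
    gcongr
    exact B.norm_le_norm (hy.mono fun s hs => hs.trans (le_abs_self _))
  refine ⟨ψ, hψ, fun x hx => ?_⟩
  have habs : ∀ᵐ s ∂μ, |B.J x s| ≤ B.J x s := hx.mono fun s hs => (abs_of_nonneg hs).le
  refine abs_le'.2 ⟨hψT (x, φ x) ⟨x, habs, rfl⟩, hψT (x, -φ x) ⟨-x, ?_, map_neg φ x⟩⟩
  simpa only [map_neg, Pi.neg_apply, abs_neg] using habs

end Dual

end BFS

/-! ### The space `L¹(m)` of a vector measure -/

section VectorMeasure

variable {m : VectorMeasure Ω X}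

theorem dualApply_apply (m : VectorMeasure Ω X) (φ : X →L[ℝ] ℝ) (A : Set Ω) :
    dualApply m φ A = φ (m A) :=
  rfl

section SignedIntegral

variable {s : SignedMeasure Ω} {f g : Ω → ℝ}

theorem integrable_posPart (hf : Integrable f s.totalVariation) :
    Integrable f s.toJordanDecomposition.posPart :=
  hf.mono_measure (Measure.le_add_right le_rfl)

theorem integrable_negPart (hf : Integrable f s.totalVariation) :
    Integrable f s.toJordanDecomposition.negPart :=
  hf.mono_measure (Measure.le_add_left le_rfl)

theorem sIntegral_add (hf : Integrable f s.totalVariation) (hg : Integrable g s.totalVariation)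
    (A : Set Ω) : sIntegral s (f + g) A = sIntegral s f A + sIntegral s g A := by
  simp only [sIntegral, Pi.add_apply]
  rw [integral_add (integrable_posPart hf).integrableOn (integrable_posPart hg).integrableOn,
    integral_add (integrable_negPart hf).integrableOn (integrable_negPart hg).integrableOn]
  ring

theorem sIntegral_smul (c : ℝ) (f : Ω → ℝ) (A : Set Ω) :
    sIntegral s (c • f) A = c * sIntegral s f A := by
  simp only [sIntegral, Pi.smul_apply, smul_eq_mul, integral_const_mul, mul_sub]

theorem sIntegral_indicator {A : Set Ω} (hA : MeasurableSet A) (f : Ω → ℝ) (A' : Set Ω) :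
    sIntegral s (A.indicator f) A' = sIntegral s f (A ∩ A') := by
  simp only [sIntegral, integral_indicator hA, Measure.restrict_restrict hA]

theorem sIntegral_const (c : ℝ) {A : Set Ω} (hA : MeasurableSet A) :
    sIntegral s (fun _ => c) A = c * s A := by
  rw [sIntegral, setIntegral_const, setIntegral_const,
    s.apply_eq_posPart_real_sub_negPart_real hA, smul_eq_mul, smul_eq_mul]
  ring

theorem abs_sIntegral_le (hf : Integrable f s.totalVariation) (A : Set Ω) :
    |sIntegral s f A| ≤ ∫ ω, |f ω| ∂s.totalVariation := by
  have habs := hf.abs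
  calc |sIntegral s f A|
      ≤ |∫ ω in A, f ω ∂s.toJordanDecomposition.posPart|
          + |∫ ω in A, f ω ∂s.toJordanDecomposition.negPart| := abs_sub _ _
    _ ≤ ∫ ω, |f ω| ∂s.toJordanDecomposition.posPart
          + ∫ ω, |f ω| ∂s.toJordanDecomposition.negPart := by
        gcongr <;> refine abs_integral_le_integral_abs.trans (setIntegral_le_integral ?_ ?_)
        · exact integrable_posPart habs
        · exact ae_of_all _ fun _ => abs_nonneg _
        · exact integrable_negPart habs
        · exact ae_of_all _ fun _ => abs_nonneg _
    _ = ∫ ω, |f ω| ∂s.totalVariation :=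
        (integral_add_measure (integrable_posPart habs) (integrable_negPart habs)).symm

theorem exists_integral_totalVariation_eq (s : SignedMeasure Ω) :
    ∃ i, MeasurableSet i ∧ ∀ f : Ω → ℝ, Integrable f s.totalVariation →
      ∫ ω, f ω ∂s.totalVariation = sIntegral s f i - sIntegral s f iᶜ := by
  obtain ⟨i, hi, hpos, hneg, hPos, hNeg⟩ := s.toJordanDecomposition_spec
  have hposPart : s.toJordanDecomposition.posPart iᶜ = 0 := by
    rw [hPos, s.toMeasureOfZeroLE_apply hpos hi hi.compl]
    simp
  have hnegPart : s.toJordanDecomposition.negPart i = 0 := by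
    rw [hNeg, s.toMeasureOfLEZero_apply hneg hi.compl hi]
    simp
  refine ⟨i, hi, fun f hf => ?_⟩
  have hintPos := integral_add_compl hi (integrable_posPart hf)
  have hintNeg := integral_add_compl hi (integrable_negPart hf)
  rw [setIntegral_measure_zero _ hposPart] at hintPos
  rw [setIntegral_measure_zero _ hnegPart] at hintNeg
  rw [SignedMeasure.totalVariation,
    integral_add_measure (integrable_posPart hf) (integrable_negPart hf), sIntegral, sIntegral,
    setIntegral_measure_zero _ hposPart, setIntegral_measure_zero _ hnegPart]
  linarith

end SignedIntegral

section Integrable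

variable {f g : Ω → ℝ} {A : Set Ω}

namespace MIntegrable

theorem add (hf : MIntegrable m f) (hg : MIntegrable m g) : MIntegrable m (f + g) := by
  refine ⟨hf.1.add hg.1, fun φ => (hf.2.1 φ).add (hg.2.1 φ), fun A hA => ?_⟩
  obtain ⟨v, hv⟩ := hf.2.2 A hA
  obtain ⟨w, hw⟩ := hg.2.2 A hA
  exact ⟨v + w, fun φ => by rw [map_add, hv, hw, sIntegral_add (hf.2.1 φ) (hg.2.1 φ)]⟩

theorem smul (c : ℝ) (hf : MIntegrable m f) : MIntegrable m (c • f) := by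
  refine ⟨hf.1.const_smul c, fun φ => (hf.2.1 φ).smul c, fun A hA => ?_⟩
  obtain ⟨v, hv⟩ := hf.2.2 A hA
  exact ⟨c • v, fun φ => by rw [map_smul, hv, sIntegral_smul, smul_eq_mul]⟩

theorem sub (hf : MIntegrable m f) (hg : MIntegrable m g) : MIntegrable m (f - g) := by
  rw [sub_eq_add_neg, ← neg_one_smul ℝ g]
  exact hf.add (hg.smul _)

theorem const (m : VectorMeasure Ω X) (c : ℝ) : MIntegrable m fun _ => c :=
  ⟨measurable_const, fun _ => integrable_const _, fun A hA => ⟨c • m A, fun φ => by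
    rw [sIntegral_const c hA, map_smul, dualApply_apply, smul_eq_mul]⟩⟩

theorem indicator (hf : MIntegrable m f) (hA : MeasurableSet A) :
    MIntegrable m (A.indicator f) := by
  refine ⟨hf.1.indicator hA, fun φ => (hf.2.1 φ).indicator hA, fun A' hA' => ?_⟩
  obtain ⟨v, hv⟩ := hf.2.2 (A ∩ A') (hA.inter hA')
  exact ⟨v, fun φ => by rw [hv, sIntegral_indicator hA]⟩

theorem abs (hf : MIntegrable m f) : MIntegrable m fun ω => |f ω| := by
  have hP : MeasurableSet {ω | f ω < 0} := measurableSet_lt hf.1 measurable_const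
  convert (hf.indicator hP.compl).sub (hf.indicator hP) using 1
  ext ω
  by_cases hω : f ω < 0
  · simp [hω, abs_of_neg hω]
  · simp [hω, abs_of_nonneg (not_lt.1 hω)]

theorem measurableSet_le_abs (hf : MIntegrable m f) (a : ℝ) : MeasurableSet {ω | a ≤ |f ω|} :=
  measurableSet_le measurable_const hf.1.abs

end MIntegrable

/-- The `m`-integrable functions as a subspace of `Ω → ℝ`. -/
def integrableSubmodule (m : VectorMeasure Ω X) : Submodule ℝ (Ω → ℝ) where
  carrier := {f | MIntegrable m f}
  add_mem' := MIntegrable.add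
  zero_mem' := MIntegrable.const m 0
  smul_mem' c _ := MIntegrable.smul c

theorem MIntegrable.sum {ι : Type*} {f : ι → Ω → ℝ} (t : Finset ι)
    (hf : ∀ i, MIntegrable m (f i)) : MIntegrable m (∑ i ∈ t, f i) :=
  (integrableSubmodule m).sum_mem fun i _ => hf i

theorem MIntegrable.cesaroMean {f : ℕ → Ω → ℝ} (hf : ∀ k, MIntegrable m (f k)) (n : ℕ) :
    MIntegrable m (cesaroMean f n) :=
  (MIntegrable.sum _ hf).smul _

theorem apply_mIntegral (hf : MIntegrable m f) (hA : MeasurableSet A) (φ : X →L[ℝ] ℝ) :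
    φ (mIntegral m f A) = sIntegral (dualApply m φ) f A := by
  have hex := hf.2.2 A hA
  rw [mIntegral, dif_pos hex]
  exact hex.choose_spec φ

theorem mIntegral_add (hf : MIntegrable m f) (hg : MIntegrable m g) (hA : MeasurableSet A) :
    mIntegral m (f + g) A = mIntegral m f A + mIntegral m g A :=
  (SeparatingDual.eq_iff_forall_dual_eq (R := ℝ)).2 fun φ => by
    rw [map_add, apply_mIntegral (hf.add hg) hA, apply_mIntegral hf hA, apply_mIntegral hg hA,
      sIntegral_add (hf.2.1 φ) (hg.2.1 φ)]

theorem mIntegral_smul (c : ℝ) (hf : MIntegrable m f) (hA : MeasurableSet A) :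
    mIntegral m (c • f) A = c • mIntegral m f A :=
  (SeparatingDual.eq_iff_forall_dual_eq (R := ℝ)).2 fun φ => by
    rw [map_smul, apply_mIntegral (hf.smul c) hA, apply_mIntegral hf hA, sIntegral_smul,
      smul_eq_mul]

theorem mIntegral_const (c : ℝ) (hA : MeasurableSet A) :
    mIntegral m (fun _ => c) A = c • m A :=
  (SeparatingDual.eq_iff_forall_dual_eq (R := ℝ)).2 fun φ => by
    rw [apply_mIntegral (MIntegrable.const m c) hA, sIntegral_const c hA, map_smul,
      dualApply_apply, smul_eq_mul]

theorem mIntegral_indicator (hf : MIntegrable m f) {A' : Set Ω} (hA : MeasurableSet A)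
    (hA' : MeasurableSet A') : mIntegral m (A.indicator f) A' = mIntegral m f (A ∩ A') :=
  (SeparatingDual.eq_iff_forall_dual_eq (R := ℝ)).2 fun φ => by
    rw [apply_mIntegral (hf.indicator hA) hA', apply_mIntegral hf (hA.inter hA'),
      sIntegral_indicator hA]

/-- Integration over `Ω` as a linear map on the `m`-integrable functions. -/
def integralLinearMap (m : VectorMeasure Ω X) : integrableSubmodule m →ₗ[ℝ] X where
  toFun f := mIntegral m f Set.univ
  map_add' f g := mIntegral_add f.2 g.2 .univ
  map_smul' c f := mIntegral_smul c f.2 .univ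

theorem mIntegral_sum {ι : Type*} {f : ι → Ω → ℝ} (t : Finset ι)
    (hf : ∀ i, MIntegrable m (f i)) :
    mIntegral m (∑ i ∈ t, f i) Set.univ = ∑ i ∈ t, mIntegral m (f i) Set.univ := by
  have hsum := map_sum (integralLinearMap m) (fun i => ⟨f i, hf i⟩) t
  rwa [integralLinearMap, LinearMap.coe_mk, AddHom.coe_mk, Submodule.coe_sum] at hsum

end Integrable

end VectorMeasure

/-! ### The norm of `L¹(m)` and weakly null sequences -/

section Norm

variable {m : VectorMeasure Ω X}

theorem exists_forall_norm_le_of_forall_dual {E ι : Type*} [SeminormedAddCommGroup E]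
    [NormedSpace ℝ E] {v : ι → E} (hv : ∀ T : E →L[ℝ] ℝ, ∃ C, ∀ i, |T (v i)| ≤ C) :
    ∃ C, ∀ i, ‖v i‖ ≤ C := by
  obtain ⟨C, hC⟩ := banach_steinhaus (g := fun i => NormedSpace.inclusionInDoubleDual ℝ E (v i)) hv
  exact ⟨C, fun i => ((NormedSpace.inclusionInDoubleDualLi ℝ).norm_map (v i)).symm.trans_le (hC i)⟩

theorem exists_forall_seminorm_le_of_forall_dual {E ι : Type*} [AddCommGroup E] [Module ℝ E]
    (p : Seminorm ℝ E) {v : ι → E}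
    (hv : ∀ (T : E →ₗ[ℝ] ℝ) (C : ℝ), (∀ x, |T x| ≤ C * p x) → ∃ K, ∀ i, |T (v i)| ≤ K) :
    ∃ C, ∀ i, p (v i) ≤ C := by
  let : SeminormedAddCommGroup E := p.toAddGroupSeminorm.toSeminormedAddCommGroup
  let : NormedSpace ℝ E := ⟨fun c x => (map_smul_eq_mul p c x).le⟩
  exact exists_forall_norm_le_of_forall_dual fun T => hv T.toLinearMap ‖T‖ T.le_opNorm

section Estimates

variable {f g : Ω → ℝ}

/- The integrals `∫_A |f| dm` are weakly bounded, hence bounded, and on the two parts of a Hahn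
decomposition of `φ ∘ m` they recover the variation integral. -/
theorem bddAbove_integral_abs (hf : MIntegrable m f) :
    BddAbove (Set.range fun φ : {φ : X →L[ℝ] ℝ // ‖φ‖ ≤ 1} =>
      ∫ ω, |f ω| ∂(dualApply m φ.1).totalVariation) := by
  obtain ⟨C, hC⟩ := exists_forall_norm_le_of_forall_dual
    (v := fun A : {A : Set Ω // MeasurableSet A} => mIntegral m (fun ω => |f ω|) A.1) fun φ =>
      ⟨∫ ω, |f ω| ∂(dualApply m φ).totalVariation, fun A => by
        rw [apply_mIntegral hf.abs A.2]
        simpa only [abs_abs] using abs_sIntegral_le (hf.2.1 φ).abs A.1⟩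
  refine ⟨C + C, ?_⟩
  rintro _ ⟨φ, rfl⟩
  obtain ⟨i, hi, hint⟩ := exists_integral_totalVariation_eq (dualApply m φ.1)
  have hle : ∀ A, MeasurableSet A → |φ.1 (mIntegral m (fun ω => |f ω|) A)| ≤ C := fun A hA =>
    (φ.1.le_opNorm _).trans ((mul_le_of_le_one_left (norm_nonneg _) φ.2).trans (hC ⟨A, hA⟩))
  dsimp only
  rw [hint _ (hf.2.1 φ.1).abs, ← apply_mIntegral hf.abs hi, ← apply_mIntegral hf.abs hi.compl]
  linarith [(abs_le.1 (hle i hi)).2, (abs_le.1 (hle iᶜ hi.compl)).1]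

theorem mNorm_nonneg (m : VectorMeasure Ω X) (f : Ω → ℝ) : 0 ≤ mNorm m f :=
  Real.iSup_nonneg fun _ => integral_nonneg fun _ => abs_nonneg _

theorem integral_abs_le_mNorm (hf : MIntegrable m f) {φ : X →L[ℝ] ℝ} (hφ : ‖φ‖ ≤ 1) :
    ∫ ω, |f ω| ∂(dualApply m φ).totalVariation ≤ mNorm m f :=
  le_ciSup (bddAbove_integral_abs hf) ⟨φ, hφ⟩

theorem mNorm_le {C : ℝ}
    (hC : ∀ φ : X →L[ℝ] ℝ, ‖φ‖ ≤ 1 → ∫ ω, |f ω| ∂(dualApply m φ).totalVariation ≤ C) :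
    mNorm m f ≤ C :=
  have : Nonempty {φ : X →L[ℝ] ℝ // ‖φ‖ ≤ 1} := ⟨⟨0, by simp⟩⟩
  ciSup_le fun φ => hC φ.1 φ.2

theorem mNorm_mono (hg : MIntegrable m g) (hfg : ∀ ω, |f ω| ≤ |g ω|) : mNorm m f ≤ mNorm m g :=
  mNorm_le fun φ hφ => (integral_mono_of_nonneg (ae_of_all _ fun _ => abs_nonneg _)
    (hg.2.1 φ).abs (ae_of_all _ hfg)).trans (integral_abs_le_mNorm hg hφ)

theorem mNorm_indicator_le (hf : MIntegrable m f) (A : Set Ω) :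
    mNorm m (A.indicator f) ≤ mNorm m f :=
  mNorm_mono hf fun _ => norm_indicator_le_norm_self f _

theorem mNorm_abs (m : VectorMeasure Ω X) (f : Ω → ℝ) :
    mNorm m (fun ω => |f ω|) = mNorm m f := by
  simp only [mNorm, abs_abs]

theorem mNorm_add_le (hf : MIntegrable m f) (hg : MIntegrable m g) :
    mNorm m (f + g) ≤ mNorm m f + mNorm m g := by
  refine mNorm_le fun φ hφ => ?_
  calc ∫ ω, |(f + g) ω| ∂(dualApply m φ).totalVariation
      ≤ ∫ ω, |f ω| + |g ω| ∂(dualApply m φ).totalVariation :=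
        integral_mono ((hf.add hg).2.1 φ).abs ((hf.2.1 φ).abs.add (hg.2.1 φ).abs)
          fun ω => abs_add_le _ _
    _ = ∫ ω, |f ω| ∂(dualApply m φ).totalVariation
          + ∫ ω, |g ω| ∂(dualApply m φ).totalVariation :=
        integral_add (hf.2.1 φ).abs (hg.2.1 φ).abs
    _ ≤ mNorm m f + mNorm m g :=
        add_le_add (integral_abs_le_mNorm hf hφ) (integral_abs_le_mNorm hg hφ)

theorem mNorm_smul (c : ℝ) (f : Ω → ℝ) : mNorm m (c • f) = |c| * mNorm m f := by
  simp only [mNorm, Pi.smul_apply, smul_eq_mul, abs_mul, integral_const_mul,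
    Real.mul_iSup_of_nonneg (abs_nonneg c)]

theorem norm_mIntegral_le (hf : MIntegrable m f) {A : Set Ω} (hA : MeasurableSet A) :
    ‖mIntegral m f A‖ ≤ mNorm m f := by
  obtain ⟨φ, hφ, hφf⟩ := exists_dual_vector'' ℝ (mIntegral m f A)
  calc ‖mIntegral m f A‖ = sIntegral (dualApply m φ) f A := by
        rw [← apply_mIntegral hf hA, hφf]; rfl
    _ ≤ ∫ ω, |f ω| ∂(dualApply m φ).totalVariation :=
        (le_abs_self _).trans (abs_sIntegral_le (hf.2.1 φ) A)
    _ ≤ mNorm m f := integral_abs_le_mNorm hf hφ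

theorem integral_abs_le_norm_mul_mNorm (hf : MIntegrable m f) (φ : X →L[ℝ] ℝ) :
    ∫ ω, |f ω| ∂(dualApply m φ).totalVariation ≤ ‖φ‖ * mNorm m f := by
  obtain ⟨i, hi, hint⟩ := exists_integral_totalVariation_eq (dualApply m φ)
  have hi₁ := hf.abs.indicator hi
  have hi₂ := hf.abs.indicator hi.compl
  set u : Ω → ℝ := i.indicator (fun ω => |f ω|) - iᶜ.indicator fun ω => |f ω| with hu
  have hsign : ∀ ω, |u ω| ≤ |f ω| := fun ω => by
    by_cases hω : ω ∈ i <;> simp [hu, hω]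
  have hφu : φ (mIntegral m u Set.univ) = ∫ ω, |f ω| ∂(dualApply m φ).totalVariation := by
    rw [hint _ (hf.2.1 φ).abs, hu, sub_eq_add_neg, ← neg_one_smul ℝ,
      mIntegral_add hi₁ (hi₂.smul _) .univ, mIntegral_smul _ hi₂ .univ,
      mIntegral_indicator hf.abs hi .univ, mIntegral_indicator hf.abs hi.compl .univ,
      Set.inter_univ, Set.inter_univ, map_add, map_smul, apply_mIntegral hf.abs hi,
      apply_mIntegral hf.abs hi.compl, neg_one_smul, sub_eq_add_neg]
  calc ∫ ω, |f ω| ∂(dualApply m φ).totalVariation ≤ ‖φ‖ * ‖mIntegral m u Set.univ‖ :=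
        hφu ▸ (le_abs_self _).trans (φ.le_opNorm _)
    _ ≤ ‖φ‖ * mNorm m f := by
        gcongr
        exact (norm_mIntegral_le (hi₁.sub hi₂) .univ).trans (mNorm_mono hf hsign)

end Estimates

/-- `mNorm` as a seminorm on the `m`-integrable functions. -/
def mSeminorm (m : VectorMeasure Ω X) : Seminorm ℝ (integrableSubmodule m) :=
  Seminorm.of (fun f => mNorm m f) (fun f g => mNorm_add_le f.2 g.2) fun c f => mNorm_smul c f.1

theorem mNorm_cesaroMean_le {f : ℕ → Ω → ℝ} (hf : ∀ k, MIntegrable m (f k)) {C : ℝ} (hC0 : 0 ≤ C)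
    (hC : ∀ k, mNorm m (f k) ≤ C) (n : ℕ) : mNorm m (cesaroMean f n) ≤ C := by
  let F : ℕ → integrableSubmodule m := fun k => ⟨f k, hf k⟩
  have hmem : cesaroMean F n ∈ (mSeminorm m).closedBall 0 C :=
    cesaroMean_mem ((mSeminorm m).convex_closedBall 0 C) ((mSeminorm m).mem_closedBall_self hC0)
      fun k _ => (mSeminorm m).mem_closedBall_zero.2 (hC k)
  rw [← coe_cesaroMean F]
  exact (mSeminorm m).mem_closedBall_zero.1 hmem

section Functionals

variable {T : (Ω → ℝ) → ℝ}

theorem exists_isBddLinFunctional_extend (T : integrableSubmodule m →ₗ[ℝ] ℝ) {C : ℝ}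
    (hT : ∀ f, |T f| ≤ C * mSeminorm m f) :
    ∃ T' : (Ω → ℝ) → ℝ, IsBddLinFunctional (MIntegrable m) (mNorm m) T' ∧
      ∀ f : integrableSubmodule m, T' f = T f := by
  classical
  let T' : (Ω → ℝ) → ℝ := fun f => if hf : MIntegrable m f then T ⟨f, hf⟩ else 0
  have hT' : ∀ f (hf : MIntegrable m f), T' f = T ⟨f, hf⟩ := fun f hf => dif_pos hf
  refine ⟨T', ⟨fun f g hf hg => ?_, fun c f hf => ?_, C, fun f hf => ?_⟩, fun f => hT' f f.2⟩
  · rw [hT' f hf, hT' g hg, hT' _ (hf.add hg), ← map_add]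
    rfl
  · rw [hT' f hf, hT' _ (hf.smul c), ← smul_eq_mul, ← map_smul]
    rfl
  · rw [hT' f hf]
    exact hT ⟨f, hf⟩

theorem exists_mNorm_le_of_weaklyNullSeq {f : ℕ → Ω → ℝ} (hf : ∀ n, MIntegrable m (f n))
    (hnull : WeaklyNullSeq (MIntegrable m) (mNorm m) f) : ∃ C, ∀ n, mNorm m (f n) ≤ C := by
  refine exists_forall_seminorm_le_of_forall_dual (mSeminorm m) (v := fun n => ⟨f n, hf n⟩)
    fun T C hT => ?_
  obtain ⟨T', hT', hext⟩ := exists_isBddLinFunctional_extend T hT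
  obtain ⟨K, hK⟩ := (Metric.isBounded_range_of_tendsto _ (hnull T' hT')).exists_norm_le
  exact ⟨K, fun n => by rw [← hext ⟨f n, hf n⟩]; exact hK _ ⟨n, rfl⟩⟩

theorem exists_abs_le_of_isBddLinFunctional
    (hT : IsBddLinFunctional (MIntegrable m) (mNorm m) T) :
    ∃ K, 0 ≤ K ∧ ∀ f, MIntegrable m f → |T f| ≤ K * mNorm m f := by
  obtain ⟨K, hK⟩ := hT.2.2
  exact ⟨|K|, abs_nonneg K, fun f hf =>
    (hK f hf).trans (mul_le_mul_of_nonneg_right (le_abs_self K) (mNorm_nonneg m f))⟩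

theorem apply_cesaroMean (hT : IsBddLinFunctional (MIntegrable m) (mNorm m) T)
    {f : ℕ → Ω → ℝ} (hf : ∀ k, MIntegrable m (f k)) (n : ℕ) :
    T (cesaroMean f n) = cesaroMean (fun k => T (f k)) n := by
  let T' : integrableSubmodule m →ₗ[ℝ] ℝ :=
    { toFun := fun g => T g
      map_add' := fun g h => hT.1 g h g.2 h.2
      map_smul' := fun c g => hT.2.1 c g g.2 }
  let F : ℕ → integrableSubmodule m := fun k => ⟨f k, hf k⟩
  rw [← coe_cesaroMean F]
  exact map_cesaroMean T' F n

theorem isBddLinFunctional_setIntegral (φ : X →L[ℝ] ℝ) (A : Set Ω) :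
    IsBddLinFunctional (MIntegrable m) (mNorm m)
      fun f => ∫ ω in A, f ω ∂(dualApply m φ).totalVariation :=
  ⟨fun _ _ hf hg => integral_add (hf.2.1 φ).integrableOn (hg.2.1 φ).integrableOn,
    fun c f _ => integral_const_mul c f,
    ‖φ‖, fun _ hf => abs_integral_le_integral_abs.trans ((setIntegral_le_integral (hf.2.1 φ).abs
      (ae_of_all _ fun _ => abs_nonneg _)).trans (integral_abs_le_norm_mul_mNorm hf φ))⟩

theorem isBddLinFunctional_mIntegral (φ : X →L[ℝ] ℝ) {A : Set Ω} (hA : MeasurableSet A) :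
    IsBddLinFunctional (MIntegrable m) (mNorm m) fun f => φ (mIntegral m f A) :=
  ⟨fun f g hf hg => by dsimp only; rw [mIntegral_add hf hg hA, map_add],
    fun c f hf => by dsimp only; rw [mIntegral_smul c hf hA, map_smul, smul_eq_mul],
    ‖φ‖, fun f hf => (φ.le_opNorm _).trans
      (mul_le_mul_of_nonneg_left (norm_mIntegral_le hf hA) (norm_nonneg φ))⟩

end Functionals

end Norm

section WeaklyNull

variable {m : VectorMeasure Ω X} {φ : X →L[ℝ] ℝ}

theorem setIntegral_abs_le {f : Ω → ℝ} (hf : MIntegrable m f) {A : Set Ω} (hA : MeasurableSet A)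
    (φ : X →L[ℝ] ℝ) :
    ∫ ω in A, |f ω| ∂(dualApply m φ).totalVariation ≤ ‖φ‖ * mNorm m (A.indicator f) := by
  refine le_of_eq_of_le ?_ (integral_abs_le_norm_mul_mNorm (hf.indicator hA) φ)
  rw [← integral_indicator hA]
  exact integral_congr_ae (ae_of_all _ fun ω => (norm_indicator_eq_indicator_norm f ω).symm)

theorem UnifACNorm.exists_setIntegral_abs_le {K : Set (Ω → ℝ)} (hK : ∀ f ∈ K, MIntegrable m f)
    (hU : UnifACNorm (dualApply m φ).totalVariation (mNorm m) K) {ε : ℝ} (hε : 0 < ε) :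
    ∃ δ > 0, ∀ A, MeasurableSet A → (dualApply m φ).totalVariation A < ENNReal.ofReal δ →
      ∀ f ∈ K, ∫ ω in A, |f ω| ∂(dualApply m φ).totalVariation ≤ ε := by
  obtain ⟨δ, hδ, hsmall⟩ := hU (ε / (‖φ‖ + 1)) (by positivity)
  refine ⟨δ, hδ, fun A hA hAδ f hf => ?_⟩
  calc ∫ ω in A, |f ω| ∂(dualApply m φ).totalVariation
      ≤ ‖φ‖ * mNorm m (A.indicator f) := setIntegral_abs_le (hK f hf) hA φ
    _ ≤ (‖φ‖ + 1) * (ε / (‖φ‖ + 1)) := by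
        gcongr
        · exact mNorm_nonneg _ _
        · exact le_add_of_nonneg_right zero_le_one
        · exact hsmall A hA hAδ f hf
    _ = ε := mul_div_cancel₀ _ (by positivity)

theorem UnifACNorm.uniformIntegrable {f : ℕ → Ω → ℝ} (hf : ∀ n, MIntegrable m (f n)) {C : ℝ}
    (hC : ∀ n, mNorm m (f n) ≤ C)
    (hU : UnifACNorm (dualApply m φ).totalVariation (mNorm m) (Set.range f)) :
    UniformIntegrable f 1 (dualApply m φ).totalVariation := by
  refine ⟨fun n => (hf n).1.aestronglyMeasurable, fun ε hε => ?_, (‖φ‖ * C).toNNReal, fun n => ?_⟩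
  · obtain ⟨δ, hδ, hsmall⟩ := hU.exists_setIntegral_abs_le (by rintro _ ⟨n, rfl⟩; exact hf n) hε
    refine ⟨δ / 2, half_pos hδ, fun n A hA hAδ => ?_⟩
    rw [eLpNorm_indicator_eq_eLpNorm_restrict hA,
      eLpNorm_one_eq_ofReal_integral_abs ((hf n).2.1 φ).integrableOn]
    refine ENNReal.ofReal_le_ofReal (hsmall A hA (hAδ.trans_lt ?_) _ ⟨n, rfl⟩)
    exact (ENNReal.ofReal_lt_ofReal_iff hδ).2 (half_lt_self hδ)
  · rw [eLpNorm_one_eq_ofReal_integral_abs ((hf n).2.1 φ)]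
    exact ENNReal.ofReal_le_ofReal ((integral_abs_le_norm_mul_mNorm (hf n) φ).trans
      (mul_le_mul_of_nonneg_left (hC n) (norm_nonneg φ)))

theorem indicator_cesaroMean {α : Type*} (A : Set α) (f : ℕ → α → ℝ) (n : ℕ) :
    A.indicator (cesaroMean f n) = cesaroMean (fun k => A.indicator (f k)) n := by
  ext ω
  by_cases hω : ω ∈ A <;> simp [cesaroMean, hω]

theorem UnifACNorm.cesaroMean {f : ℕ → Ω → ℝ} (hf : ∀ n, MIntegrable m (f n))
    {η : Measure Ω} (hU : UnifACNorm η (mNorm m) (Set.range f)) :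
    UnifACNorm η (mNorm m) (Set.range (Paper.cesaroMean f)) := by
  intro ε hε
  obtain ⟨δ, hδ, hsmall⟩ := hU ε hε
  refine ⟨δ, hδ, ?_⟩
  rintro A hA hAδ _ ⟨n, rfl⟩
  rw [indicator_cesaroMean]
  exact mNorm_cesaroMean_le (fun k => (hf k).indicator hA) hε.le
    (fun k => hsmall A hA hAδ _ ⟨k, rfl⟩) n

theorem UnifACNorm.comp {η : Measure Ω} {N : (Ω → ℝ) → ℝ} {f : ℕ → Ω → ℝ}
    (hU : UnifACNorm η N (Set.range f)) (σ : ℕ → ℕ) :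
    UnifACNorm η N (Set.range fun k => f (σ k)) := by
  intro ε hε
  obtain ⟨δ, hδ, hsmall⟩ := hU ε hε
  exact ⟨δ, hδ, fun A hA hAδ g hg => hsmall A hA hAδ g (Set.range_comp_subset_range σ f hg)⟩

theorem mNorm_le_indicator_add {f : Ω → ℝ} (hf : MIntegrable m f) {A : Set Ω}
    (hA : MeasurableSet A) {θ : ℝ} (hθ : 0 ≤ θ) (hle : ∀ ω ∉ A, |f ω| ≤ θ) :
    mNorm m f ≤ mNorm m (A.indicator f) + θ * mNorm m fun _ => 1 := by
  have hcompl : mNorm m (Aᶜ.indicator f) ≤ mNorm m (θ • fun _ => (1 : ℝ)) := by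
    refine mNorm_mono ((MIntegrable.const m 1).smul θ) fun ω => ?_
    by_cases hω : ω ∈ A
    · simp [hω]
    · simpa [hω, abs_of_nonneg hθ] using hle ω hω
  rw [mNorm_smul, abs_of_nonneg hθ] at hcompl
  have hsplit := mNorm_add_le (hf.indicator hA) (hf.indicator hA.compl)
  rw [Set.indicator_self_add_compl] at hsplit
  exact hsplit.trans (by gcongr)

theorem UnifACNorm.tendsto_mNorm {η : Measure Ω} {f : ℕ → Ω → ℝ} (hf : ∀ n, MIntegrable m (f n))
    (hU : UnifACNorm η (mNorm m) (Set.range f))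
    (hlim : Tendsto (fun n => eLpNorm (f n) 1 η) atTop (𝓝 0)) :
    Tendsto (fun n => mNorm m (f n)) atTop (𝓝 0) := by
  refine tendsto_order.2 ⟨fun a ha => .of_forall fun n => ha.trans_le (mNorm_nonneg _ _),
    fun ε hε => ?_⟩
  obtain ⟨δ, hδ, hsmall⟩ := hU (ε / 2) (by positivity)
  obtain ⟨θ, hθ, hθM⟩ := exists_pos_mul_lt (half_pos hε) (mNorm m fun _ => 1)
  rw [mul_comm] at hθM
  have hmeas : TendstoInMeasure η f atTop 0 := tendstoInMeasure_of_tendsto_eLpNorm one_ne_zero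
    (fun n => (hf n).1.aestronglyMeasurable) aestronglyMeasurable_zero (by simpa using hlim)
  filter_upwards [(tendstoInMeasure_iff_norm.1 hmeas θ hθ).eventually
    (gt_mem_nhds (ENNReal.ofReal_pos.2 hδ))] with n hn
  simp only [Pi.zero_apply, sub_zero, Real.norm_eq_abs] at hn
  have hA : MeasurableSet {ω | θ ≤ |f n ω|} := (hf n).measurableSet_le_abs θ
  have hle := mNorm_le_indicator_add (hf n) hA hθ.le
    fun ω (hω : ¬ θ ≤ |f n ω|) => (not_le.1 hω).le
  have hlarge := hsmall _ hA hn _ ⟨n, rfl⟩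
  linarith

theorem UnifACNorm.exists_subseq_tendsto_mNorm_cesaroMean {f : ℕ → Ω → ℝ}
    (hf : ∀ n, MIntegrable m (f n)) {C : ℝ} (hC : ∀ n, mNorm m (f n) ≤ C)
    (hU : UnifACNorm (dualApply m φ).totalVariation (mNorm m) (Set.range f))
    (hlim : ∀ A, MeasurableSet A →
      Tendsto (fun n => ∫ ω in A, f n ω ∂(dualApply m φ).totalVariation) atTop (𝓝 0)) :
    ∃ σ : ℕ → ℕ, StrictMono σ ∧ ∀ τ : ℕ → ℕ, StrictMono τ →
      Tendsto (fun n => mNorm m (Paper.cesaroMean (fun k => f (σ (τ k))) n)) atTop (𝓝 0) := by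
  obtain ⟨σ, hσ, hmean⟩ :=
    exists_subseq_tendsto_eLpNorm_cesaroMean (hU.uniformIntegrable hf hC) hlim
  refine ⟨σ, hσ, fun τ hτ => ?_⟩
  have hf' : ∀ k, MIntegrable m (f (σ (τ k))) := fun k => hf _
  exact UnifACNorm.tendsto_mNorm (MIntegrable.cesaroMean hf')
    (UnifACNorm.cesaroMean hf' (hU.comp fun k => σ (τ k))) (hmean τ hτ)

/- A cluster point of `T (f n)` is the limit of `T` on Cesàro means that tend to zero. -/
theorem UnifACNorm.weaklyNullSeq {f : ℕ → Ω → ℝ} (hf : ∀ n, MIntegrable m (f n)) {C : ℝ}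
    (hC : ∀ n, mNorm m (f n) ≤ C)
    (hU : UnifACNorm (dualApply m φ).totalVariation (mNorm m) (Set.range f))
    (hlim : ∀ A, MeasurableSet A →
      Tendsto (fun n => ∫ ω in A, f n ω ∂(dualApply m φ).totalVariation) atTop (𝓝 0)) :
    WeaklyNullSeq (MIntegrable m) (mNorm m) f := by
  intro T hT
  obtain ⟨K, hK, hTK⟩ := exists_abs_le_of_isBddLinFunctional hT
  refine tendsto_of_subseq_tendsto fun ν hν => ?_
  obtain ⟨L, -, ρ, hρ, hL⟩ := tendsto_subseq_of_bounded
    (Metric.isBounded_closedBall (x := (0 : ℝ)) (r := K * C)) (x := fun n => T (f (ν n)))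
    fun n => mem_closedBall_zero_iff.2 ((hTK _ (hf _)).trans (by gcongr; exact hC _))
  obtain ⟨σ, hσ, hmean⟩ := UnifACNorm.exists_subseq_tendsto_mNorm_cesaroMean
    (fun n => hf (ν (ρ n))) (fun n => hC _) (hU.comp fun n => ν (ρ n))
    fun A hA => (hlim A hA).comp (hν.comp hρ.tendsto_atTop)
  have hf' : ∀ k, MIntegrable m (f (ν (ρ (σ k)))) := fun k => hf _
  have hzero : Tendsto (Paper.cesaroMean fun k => T (f (ν (ρ (σ k))))) atTop (𝓝 0) := by
    refine squeeze_zero_norm (fun n => ?_) (by simpa using (hmean id strictMono_id).const_mul K)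
    rw [← apply_cesaroMean hT hf']
    exact hTK _ (MIntegrable.cesaroMean hf' n)
  have hL0 : L = 0 := tendsto_nhds_unique (hL.comp hσ.tendsto_atTop).cesaro hzero
  exact ⟨ρ, hL0 ▸ hL⟩

theorem tendsto_setIntegral_indicator_compl {f : ℕ → Ω → ℝ} (hf : ∀ n, MIntegrable m (f n))
    (hnull : WeaklyNullSeq (MIntegrable m) (mNorm m) f) {D : ℕ → Set Ω}
    (hD : ∀ n, MeasurableSet (D n)) (hdisj : Pairwise (Function.onFun Disjoint D))
    (hU : UnifACNorm (dualApply m φ).totalVariation (mNorm m)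
      (Set.range fun n => (D n)ᶜ.indicator (f n)))
    {A : Set Ω} (hA : MeasurableSet A) :
    Tendsto (fun n => ∫ ω in A, (D n)ᶜ.indicator (f n) ω ∂(dualApply m φ).totalVariation)
      atTop (𝓝 0) := by
  set η := (dualApply m φ).totalVariation
  have hg : ∀ n, MIntegrable m ((D n)ᶜ.indicator (f n)) := fun n => (hf n).indicator (hD n).compl
  rw [Metric.tendsto_atTop']
  intro ε hε
  obtain ⟨δ, hδ, hsmall⟩ :=
    hU.exists_setIntegral_abs_le (by rintro _ ⟨n, rfl⟩; exact hg n) (half_pos hε)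
  obtain ⟨r, hr⟩ := ((tendsto_measure_biUnion_Ici_zero_of_pairwise_disjoint (μ := η)
    (fun n => (hD n).nullMeasurableSet) hdisj).eventually
      (gt_mem_nhds (ENNReal.ofReal_pos.2 hδ))).exists
  set U : Set Ω := ⋃ i ≥ r, D i
  have hUm : MeasurableSet U := .biUnion (Set.to_countable _) fun i _ => hD i
  obtain ⟨N, hN⟩ := Metric.tendsto_atTop.1
    (hnull _ (isBddLinFunctional_setIntegral φ (A \ U))) (ε / 2) (half_pos hε)
  refine ⟨max N r, fun n hn => ?_⟩
  have hoff : ∫ ω in A \ U, (D n)ᶜ.indicator (f n) ω ∂η = ∫ ω in A \ U, f n ω ∂η :=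
    setIntegral_congr_fun (hA.diff hUm) fun ω hω => Set.indicator_of_mem
      (show ω ∈ (D n)ᶜ from
        fun hωD => hω.2 (Set.mem_biUnion ((le_max_right N r).trans hn.le) hωD)) _
  have hon : |∫ ω in A ∩ U, (D n)ᶜ.indicator (f n) ω ∂η| ≤ ε / 2 :=
    abs_integral_le_integral_abs.trans (hsmall _ (hA.inter hUm)
      ((measure_mono Set.inter_subset_right).trans_lt hr) _ ⟨n, rfl⟩)
  have hoff' := hN n ((le_max_left N r).trans hn.le)
  rw [dist_zero_right, Real.norm_eq_abs] at hoff' ⊢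
  rw [← integral_inter_add_sdiff hUm ((hg n).2.1 φ).integrableOn, hoff]
  linarith [abs_add_le (∫ ω in A ∩ U, (D n)ᶜ.indicator (f n) ω ∂η) (∫ ω in A \ U, f n ω ∂η)]

end WeaklyNull

/-! ### Positive vector measures -/

section Positive

theorem negPart_eq_zero_of_nonneg {s : SignedMeasure Ω} (hs : ∀ A, MeasurableSet A → 0 ≤ s A) :
    s.toJordanDecomposition.negPart = 0 := by
  obtain ⟨i, hi, -, hneg, -, hnegPart⟩ := s.toJordanDecomposition_spec
  ext A hA
  refine (measureReal_eq_zero_iff).1 (le_antisymm ?_ measureReal_nonneg)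
  rw [hnegPart, SignedMeasure.toMeasureOfLEZero_real_apply _ hneg hi.compl hA, neg_nonpos]
  exact hs _ (hi.compl.inter hA)

theorem sIntegral_nonneg {s : SignedMeasure Ω} (hs : ∀ A, MeasurableSet A → 0 ≤ s A) {f : Ω → ℝ}
    (hf : ∀ ω, 0 ≤ f ω) (A : Set Ω) : 0 ≤ sIntegral s f A := by
  rw [sIntegral, negPart_eq_zero_of_nonneg hs, Measure.restrict_zero, integral_zero_measure,
    sub_zero]
  exact integral_nonneg hf

theorem mIntegral_univ_eq_add_compl {m : VectorMeasure Ω X} {f : Ω → ℝ} (hf : MIntegrable m f)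
    {A : Set Ω} (hA : MeasurableSet A) :
    mIntegral m f Set.univ = mIntegral m f A + mIntegral m f Aᶜ := by
  have hsum := mIntegral_add (hf.indicator hA) (hf.indicator hA.compl) MeasurableSet.univ
  rwa [Set.indicator_self_add_compl, mIntegral_indicator hf hA .univ, Set.inter_univ,
    mIntegral_indicator hf hA.compl .univ, Set.inter_univ] at hsum

theorem totalVariation_absolutelyContinuous {m : VectorMeasure Ω X} {η : Measure Ω}
    (hη : ∀ A, MeasurableSet A → η A = 0 → semivar m A = 0) (φ : X →L[ℝ] ℝ) :
    (dualApply m φ).totalVariation ≪ η := by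
  have hmη : ∀ A, MeasurableSet A → η A = 0 → m A = 0 := by
    intro A hA hA0
    obtain ⟨ψ, hψ, hψA⟩ := exists_dual_vector'' ℝ (m A)
    have hvar : (dualApply m ψ).totalVariation A = 0 :=
      (ENNReal.iSup_eq_zero.1 (hη A hA hA0)) ⟨ψ, hψ⟩
    have hψ0 := SignedMeasure.null_of_totalVariation_zero _ hvar
    rw [dualApply_apply, hψA] at hψ0
    exact norm_eq_zero.1 hψ0
  rw [← VectorMeasure.ennrealToMeasure_toENNRealVectorMeasure η,
    ← SignedMeasure.absolutelyContinuous_ennreal_iff]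
  refine VectorMeasure.AbsolutelyContinuous.mk fun A hA hA0 => ?_
  rw [Measure.toENNRealVectorMeasure_apply_measurable hA] at hA0
  rw [dualApply_apply, hmη A hA hA0, map_zero]

theorem tendsto_apply_mIntegral_of_antitone {m : VectorMeasure Ω X} {f : Ω → ℝ}
    (hf : MIntegrable m f) (φ : X →L[ℝ] ℝ) {C : ℕ → Set Ω} (hC : ∀ n, MeasurableSet (C n))
    (hanti : Antitone C) (hnull : (dualApply m φ).totalVariation (⋂ n, C n) = 0) :
    Tendsto (fun n => φ (mIntegral m f (C n))) atTop (𝓝 0) := by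
  obtain ⟨hpos, hneg⟩ := add_eq_zero.1 hnull
  have hlim := (tendsto_setIntegral_of_antitone hC hanti
    ⟨0, (integrable_posPart (hf.2.1 φ)).integrableOn⟩).sub (tendsto_setIntegral_of_antitone hC hanti
      ⟨0, (integrable_negPart (hf.2.1 φ)).integrableOn⟩)
  rw [setIntegral_measure_zero _ hpos, setIntegral_measure_zero _ hneg, sub_zero] at hlim
  exact hlim.congr fun n => (apply_mIntegral hf (hC n) φ).symm

/-- The vector measure `m` takes its values in the cone `X⁺` of the Banach function space `X`. -/
def BFS.PositiveMeasure (B : BFS S μ X) (m : VectorMeasure Ω X) : Prop :=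
  ∀ A, MeasurableSet A → 0 ≤ᵐ[μ] B.J (m A)

namespace BFS.PositiveMeasure

variable {B : BFS S μ X} {m : VectorMeasure Ω X} {f g : Ω → ℝ} {A : Set Ω}

theorem mIntegral_nonneg (hm : B.PositiveMeasure m) (hf : MIntegrable m f) (hf0 : ∀ ω, 0 ≤ f ω)
    (hA : MeasurableSet A) : 0 ≤ᵐ[μ] B.J (mIntegral m f A) := by
  refine B.nonneg_of_forall_isPositive fun φ hφ => ?_
  rw [apply_mIntegral hf hA]
  exact sIntegral_nonneg (fun C hC => hφ _ (hm C hC)) hf0 A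

theorem mIntegral_mono (hm : B.PositiveMeasure m) (hf : MIntegrable m f) (hg : MIntegrable m g)
    (hfg : ∀ ω, f ω ≤ g ω) (hA : MeasurableSet A) :
    B.J (mIntegral m f A) ≤ᵐ[μ] B.J (mIntegral m g A) := by
  have hsub := hm.mIntegral_nonneg (hg.sub hf) (fun ω => sub_nonneg.2 (hfg ω)) hA
  have hadd := mIntegral_add (hg.sub hf) hf hA
  rw [sub_add_cancel] at hadd
  filter_upwards [hsub] with s hs
  rw [hadd, map_add, Pi.add_apply]
  exact le_add_of_nonneg_left hs

theorem norm_mIntegral_mono (hm : B.PositiveMeasure m) (hf : MIntegrable m f)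
    (hg : MIntegrable m g) (hf0 : ∀ ω, 0 ≤ f ω) (hfg : ∀ ω, f ω ≤ g ω) (hA : MeasurableSet A) :
    ‖mIntegral m f A‖ ≤ ‖mIntegral m g A‖ := by
  refine B.norm_le_norm ?_
  filter_upwards [hm.mIntegral_nonneg hf hf0 hA, hm.mIntegral_mono hf hg hfg hA] with s h0 hle
  rw [abs_of_nonneg h0]
  exact hle.trans (le_abs_self _)

/- A Hahn decomposition `Ω = i ∪ iᶜ` for `φ ∘ m` turns the variation integral into
`φ (∫_i |f| dm) - φ (∫_iᶜ |f| dm)`, which is at most `|φ| (∫ |f| dm)`. -/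
theorem mNorm_eq (hm : B.PositiveMeasure m) (hf : MIntegrable m f) :
    mNorm m f = ‖mIntegral m (fun ω => |f ω|) Set.univ‖ := by
  refine le_antisymm (mNorm_le fun φ hφ => ?_)
    ((norm_mIntegral_le hf.abs .univ).trans_eq (mNorm_abs m f))
  obtain ⟨i, hi, hHahn⟩ := exists_integral_totalVariation_eq (dualApply m φ)
  obtain ⟨ψ, hψ, hφψ⟩ := B.exists_forall_abs_apply_le φ
  set v : Set Ω → X := mIntegral m fun ω => |f ω|
  have hv : ∀ A, MeasurableSet A → 0 ≤ᵐ[μ] B.J (v A) := fun A hA =>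
    hm.mIntegral_nonneg hf.abs (fun ω => abs_nonneg (f ω)) hA
  calc ∫ ω, |f ω| ∂(dualApply m φ).totalVariation
      = φ (v i) - φ (v iᶜ) := by
        rw [hHahn _ (hf.abs.2.1 φ), apply_mIntegral hf.abs hi, apply_mIntegral hf.abs hi.compl]
    _ ≤ ψ (v i) + ψ (v iᶜ) := by
        linarith [le_abs_self (φ (v i)), neg_abs_le (φ (v iᶜ)), hφψ _ (hv i hi),
          hφψ _ (hv iᶜ hi.compl)]
    _ = ψ (v Set.univ) := by rw [← map_add, ← mIntegral_univ_eq_add_compl hf.abs hi]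
    _ ≤ 1 * ‖v Set.univ‖ := (le_abs_self _).trans (ψ.le_of_opNorm_le (hψ.trans hφ) _)
    _ = ‖v Set.univ‖ := one_mul _

theorem mNorm_indicator_eq (hm : B.PositiveMeasure m) (hf : MIntegrable m f)
    (hA : MeasurableSet A) :
    mNorm m (A.indicator f) = ‖mIntegral m (fun ω => |f ω|) A‖ := by
  have habs : (fun ω => |A.indicator f ω|) = A.indicator fun ω => |f ω| :=
    funext fun ω => norm_indicator_eq_indicator_norm f ω
  rw [hm.mNorm_eq (hf.indicator hA), habs, mIntegral_indicator hf.abs hA .univ, Set.inter_univ]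

theorem unifACNorm_singleton (hm : B.PositiveMeasure m) {η : Measure Ω}
    (hη : ∀ φ : X →L[ℝ] ℝ, (dualApply m φ).totalVariation ≪ η) (hf : MIntegrable m f) :
    UnifACNorm η (mNorm m) {f} := by
  suffices ∀ C : ℕ → Set Ω, (∀ n, MeasurableSet (C n)) → Antitone C → η (⋂ n, C n) = 0 →
      Tendsto (fun n => mNorm m ((C n).indicator f)) atTop (𝓝 0) by
    intro ε hε
    obtain ⟨δ, hδ, hsmall⟩ := exists_forall_measure_lt_le (N := fun A => mNorm m (A.indicator f))
      (fun A C _ hC hAC => mNorm_mono (hf.indicator hC) fun ω =>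
        norm_indicator_le_of_subset hAC f ω)
      this hε
    exact ⟨δ, hδ, fun A hA hAδ g hg => hg ▸ hsmall A hA hAδ⟩
  intro C hC hanti hnull
  simp only [hm.mNorm_indicator_eq hf (hC _)]
  have h0 : ∀ ω, 0 ≤ |f ω| := fun ω => abs_nonneg (f ω)
  refine B.norm_tendsto_zero_of_antitone (fun n => hm.mIntegral_nonneg hf.abs h0 (hC n))
    (fun i j hij => ?_)
    fun φ => tendsto_apply_mIntegral_of_antitone hf.abs φ hC hanti (hη φ hnull)
  have hmono := hm.mIntegral_mono (hf.abs.indicator (hC j)) (hf.abs.indicator (hC i))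
    (fun ω => Set.indicator_le_indicator_of_subset (hanti hij) h0 ω) MeasurableSet.univ
  simpa only [mIntegral_indicator hf.abs (hC _) .univ, Set.inter_univ] using hmono

end BFS.PositiveMeasure

end Positive

/-! ### Subsequence splitting in `L¹(m)` -/

section Splitting

theorem tendsto_measure_biUnion_Ici_of_tsum_ne_top {η : Measure Ω} {E : ℕ → Set Ω}
    (hE : ∑' i, η (E i) ≠ ∞) : Tendsto (fun n => η (⋃ i ∈ Set.Ici n, E i)) atTop (𝓝 0) := by
  refine tendsto_of_tendsto_of_tendsto_of_le_of_le tendsto_const_nhds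
    (ENNReal.tendsto_sum_nat_add _ hE) (fun _ => zero_le) fun n => ?_
  refine (measure_mono (Set.iUnion₂_subset fun i hi => ?_)).trans
    (measure_iUnion_le fun i => E (i + n))
  exact (Nat.sub_add_cancel hi).symm ▸ Set.subset_iUnion (fun i => E (i + n)) (i - n)

theorem exists_strictMono_forall_measure_biUnion_Ici_lt {η : Measure Ω} {E : ℕ → Set Ω}
    (hE : ∑' i, η (E i) ≠ ∞) {d : ℕ → ℝ} (hd : ∀ i, 0 < d i) :
    ∃ τ : ℕ → ℕ, StrictMono τ ∧
      ∀ i, η (⋃ j ∈ Set.Ici (τ (i + 1)), E j) < ENNReal.ofReal (d (τ i)) := by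
  have hnext : ∀ p, ∃ q > p, η (⋃ j ∈ Set.Ici q, E j) < ENNReal.ofReal (d p) := fun p =>
    ((eventually_gt_atTop p).and ((tendsto_measure_biUnion_Ici_of_tsum_ne_top hE).eventually
      (gt_mem_nhds (ENNReal.ofReal_pos.2 (hd p))))).exists
  choose next hnext_gt hnext_lt using hnext
  have hsucc : ∀ i, next^[i + 1] 0 = next (next^[i] 0) := fun i =>
    Function.iterate_succ_apply' next i 0
  refine ⟨fun i => next^[i] 0, strictMono_nat_of_lt_succ fun i => ?_, fun i => ?_⟩
  · exact hsucc i ▸ hnext_gt _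
  · simp only [hsucc]
    exact hnext_lt _

theorem pairwise_disjoint_diff_biUnion_Ici {α : Type*} (E : ℕ → Set α) {τ : ℕ → ℕ}
    (hτ : StrictMono τ) :
    Pairwise (Function.onFun Disjoint fun i => E (τ i) \ ⋃ j ∈ Set.Ici (τ (i + 1)), E j) := by
  refine (pairwise_disjoint_on _).2 fun i j hij => Set.disjoint_left.2 ?_
  rintro ω ⟨-, hωi⟩ ⟨hωj, -⟩
  exact hωi (Set.mem_biUnion (Set.mem_Ici.2 (hτ.monotone hij)) hωj)

theorem unifACNorm_range_of_tail {η : Measure Ω} {N : (Ω → ℝ) → ℝ} {g : ℕ → Ω → ℝ}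
    (hg : ∀ i, UnifACNorm η N {g i})
    (htail : ∀ ε > 0, ∃ J, ∃ δ > 0, ∀ A, MeasurableSet A → η A < ENNReal.ofReal δ →
      ∀ i ≥ J, N (A.indicator (g i)) ≤ ε) :
    UnifACNorm η N (Set.range g) := by
  intro ε hε
  obtain ⟨J, δ, hδ, hJ⟩ := htail ε hε
  choose d hd hsmall using fun i => hg i ε hε
  obtain ⟨r, hr, hrδ, hr0⟩ := (((Finset.range J).eventually_all.2
    fun i _ => Iio_mem_nhds (hd i)).filter_mono nhdsWithin_le_nhds |>.and
      (Ioo_mem_nhdsGT hδ)).exists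
  refine ⟨r, hrδ, ?_⟩
  rintro A hA hAr _ ⟨i, rfl⟩
  obtain hi | hi := lt_or_ge i J
  · exact hsmall i A hA (hAr.trans_le
      (ENNReal.ofReal_le_ofReal (hr i (Finset.mem_range.2 hi)).le)) _ rfl
  · exact hJ A hA (hAr.trans_le (ENNReal.ofReal_le_ofReal hr0.le)) i hi

/-- The set where `s < |f| ≤ t`. -/
def absBand {α : Type*} (f : α → ℝ) (s t : ℝ) : Set α :=
  (fun ω => |f ω|) ⁻¹' Set.Ioc s t

theorem sum_indicator_absBand_le {α : Type*} (f : α → ℝ) {s : ℕ → ℝ} (hs : Monotone s) (K : ℕ)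
    (ω : α) :
    ∑ k ∈ Finset.range K, (absBand f (s k) (s (k + 1))).indicator (fun ω => |f ω|) ω ≤ |f ω| := by
  have hdisj : Pairwise (Function.onFun Disjoint fun k => absBand f (s k) (s (k + 1))) :=
    fun i j hij => (hs.pairwise_disjoint_on_Ioc_succ hij).preimage _
  rw [← Finset.indicator_biUnion_apply _ _ (hdisj.set_pairwise _)]
  exact Set.indicator_le_self' (fun _ _ => abs_nonneg _) ω

theorem MIntegrable.measurableSet_absBand {m : VectorMeasure Ω X} {f : Ω → ℝ}
    (hf : MIntegrable m f) (s t : ℝ) : MeasurableSet (absBand f s t) :=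
  hf.1.abs measurableSet_Ioc

theorem mNorm_le_add₃ {m : VectorMeasure Ω X} {f a b c : Ω → ℝ} (ha : MIntegrable m a)
    (hb : MIntegrable m b) (hc : MIntegrable m c) (hf : ∀ ω, |f ω| ≤ |a ω| + |b ω| + |c ω|) :
    mNorm m f ≤ mNorm m a + mNorm m b + mNorm m c := by
  rw [← mNorm_abs m a, ← mNorm_abs m b, ← mNorm_abs m c]
  exact (mNorm_mono ((ha.abs.add hb.abs).add hc.abs) fun ω => (hf ω).trans (le_abs_self _)).trans
    ((mNorm_add_le (ha.abs.add hb.abs) hc.abs).trans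
      (add_le_add_left (mNorm_add_le ha.abs hb.abs) _))

theorem mNorm_indicator_compl_diff_le {m : VectorMeasure Ω X} {f : Ω → ℝ} (hf : MIntegrable m f)
    {A U : Set Ω} (hA : MeasurableSet A) (hU : MeasurableSet U) (s t : ℝ) :
    mNorm m (A.indicator (({ω | t < |f ω|} \ U)ᶜ.indicator f)) ≤
      mNorm m (A.indicator fun _ => s) + mNorm m ((absBand f s t).indicator f) +
        mNorm m (U.indicator f) := by
  refine mNorm_le_add₃ ((MIntegrable.const m s).indicator hA)
    (hf.indicator (hf.measurableSet_absBand s t)) (hf.indicator hU) fun ω => ?_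
  have ha := abs_nonneg (A.indicator (fun _ => s) ω)
  have hb := abs_nonneg ((absBand f s t).indicator f ω)
  have hc := abs_nonneg (U.indicator f ω)
  by_cases hωA : ω ∈ A
  swap
  · rw [Set.indicator_of_notMem hωA, abs_zero]
    positivity
  rw [Set.indicator_of_mem hωA] at ha ⊢
  rw [Set.indicator_of_mem hωA]
  by_cases hωD : ω ∈ {ω | t < |f ω|} \ U
  · rw [Set.indicator_of_notMem (not_not.2 hωD), abs_zero]
    positivity
  rw [Set.indicator_of_mem hωD]
  by_cases hωU : ω ∈ U
  · rw [Set.indicator_of_mem hωU]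
    linarith
  have hft : |f ω| ≤ t := not_lt.1 fun h => hωD ⟨h, hωU⟩
  obtain hs | hs := le_or_gt |f ω| s
  · linarith [le_abs_self s]
  · rw [Set.indicator_of_mem (show ω ∈ absBand f s t from ⟨hs, hft⟩)]
    linarith

variable {m : VectorMeasure Ω X} {φ : X →L[ℝ] ℝ} {f : ℕ → Ω → ℝ} {C : ℝ}

theorem tsum_totalVariation_two_pow_lt_ne_top (hf : ∀ n, MIntegrable m (f n))
    (hC : ∀ n, mNorm m (f n) ≤ C) (φ : X →L[ℝ] ℝ) :
    ∑' i, (dualApply m φ).totalVariation {ω | 2 ^ i < |f i ω|} ≠ ∞ := by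
  set η := (dualApply m φ).totalVariation
  have hbound : ∀ i, η {ω | 2 ^ i < |f i ω|} ≤ ENNReal.ofReal (‖φ‖ * C * (1 / 2) ^ i) := by
    intro i
    have hmarkov := mul_meas_ge_le_integral_of_nonneg (ae_of_all η fun ω => abs_nonneg (f i ω))
      ((hf i).2.1 φ).abs (2 ^ i)
    have hle : η.real {ω | 2 ^ i ≤ |f i ω|} ≤ ‖φ‖ * C * (1 / 2) ^ i := by
      rw [one_div, inv_pow, ← div_eq_mul_inv, le_div_iff₀' (by positivity)]
      exact hmarkov.trans ((integral_abs_le_norm_mul_mNorm (hf i) φ).trans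
        (mul_le_mul_of_nonneg_left (hC i) (norm_nonneg φ)))
    refine (measure_mono fun ω (hω : 2 ^ i < |f i ω|) => hω.le).trans
      ((ENNReal.le_ofReal_iff_toReal_le (measure_ne_top _ _) ?_).2 hle)
    exact measureReal_nonneg.trans hle
  have hC0 : 0 ≤ C := (mNorm_nonneg m (f 0)).trans (hC 0)
  refine ne_top_of_le_ne_top ?_ (ENNReal.tsum_le_tsum hbound)
  rw [← ENNReal.ofReal_tsum_of_nonneg (fun i => by positivity)
    (summable_geometric_two.mul_left _)]
  exact ENNReal.ofReal_ne_top

namespace BFS.PositiveMeasure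

variable {B : BFS S μ X}

theorem exists_eventually_exists_mNorm_absBand_le [CompleteSpace X] [IsFiniteMeasure μ]
    (hm : B.PositiveMeasure m) (hac : B.UnifAC {m Set.univ}) (hf : ∀ n, MIntegrable m (f n))
    (hC : ∀ n, mNorm m (f n) ≤ C) {G H : ℕ → X}
    (hGH : ∀ n, mIntegral m (fun ω => |f n ω|) Set.univ = G n + H n)
    (hG : B.UnifAC (Set.range G))
    (hH : ∀ i j, i ≠ j → (fun s => B.J (H i) s * B.J (H j) s) =ᵐ[μ] 0)
    {s : ℕ → ℕ} (hs : Monotone s) {ε : ℝ} (hε : 0 < ε) :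
    ∃ K, ∀ᶠ n in atTop, ∃ k < K,
      mNorm m ((absBand (f n) (s k) (s (k + 1))).indicator (f n)) ≤ ε := by
  have hband : ∀ n k, MeasurableSet (absBand (f n) (s k) (s (k + 1))) := fun n k =>
    (hf n).measurableSet_absBand _ _
  have hint : ∀ n k, MIntegrable m
      ((absBand (f n) (s k) (s (k + 1))).indicator fun ω => |f n ω|) := fun n k =>
    (hf n).abs.indicator (hband n k)
  have hint_eq : ∀ n k, mIntegral m
      ((absBand (f n) (s k) (s (k + 1))).indicator fun ω => |f n ω|) Set.univ =
        mIntegral m (fun ω => |f n ω|) (absBand (f n) (s k) (s (k + 1))) := fun n k => by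
    rw [mIntegral_indicator (hf n).abs (hband n k) .univ, Set.inter_univ]
  simp only [hm.mNorm_indicator_eq (hf _) (hband _ _)]
  refine exists_eventually_exists_norm_le (C := C) (c := fun k => (s (k + 1) : ℝ)) (hm _ .univ) hac
    (fun n => ?_) hG hH
    (fun n k => hm.mIntegral_nonneg (hf n).abs (fun ω => abs_nonneg _) (hband n k))
    (fun n k => ?_) (fun n K => ?_) hε
  · rw [← hGH, ← hm.mNorm_eq (hf n)]
    exact hC n
  · rw [← hint_eq, ← mIntegral_const _ .univ]
    exact hm.mIntegral_mono (hint n k) (.const m _)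
      (fun ω => Set.indicator_le' (fun ω hω => hω.2) (fun _ _ => Nat.cast_nonneg _) ω) .univ
  · simp only [← hint_eq, ← mIntegral_sum _ (hint n), ← hGH]
    refine hm.mIntegral_mono (.sum _ (hint n)) (hf n).abs (fun ω => ?_) .univ
    rw [Finset.sum_apply]
    exact sum_indicator_absBand_le (f n) (Nat.mono_cast.comp hs) K ω

/- Along an ultrafilter a failing `∀ᶠ` becomes a `∀ᶠ` of the negation, so if the claim fails, then
successive bands of norm larger than `ε` can be found simultaneously for many `n`. -/
theorem exists_forall_eventually_mNorm_absBand_le [CompleteSpace X] [IsFiniteMeasure μ]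
    (hm : B.PositiveMeasure m) (hac : B.UnifAC {m Set.univ}) (hf : ∀ n, MIntegrable m (f n))
    (hC : ∀ n, mNorm m (f n) ≤ C) {G H : ℕ → X}
    (hGH : ∀ n, mIntegral m (fun ω => |f n ω|) Set.univ = G n + H n)
    (hG : B.UnifAC (Set.range G))
    (hH : ∀ i j, i ≠ j → (fun s => B.J (H i) s * B.J (H j) s) =ᵐ[μ] 0) {ε : ℝ} (hε : 0 < ε) :
    ∃ s : ℕ, ∀ t : ℕ, ∀ᶠ n in (hyperfilter ℕ : Filter ℕ),
      mNorm m ((absBand (f n) s t).indicator (f n)) ≤ ε := by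
  by_contra! hcon
  choose T hT using hcon
  have hlt : ∀ s : ℕ, s < T s := by
    intro s
    by_contra! hle
    obtain ⟨n, hn⟩ := (hT s).exists
    have hempty : absBand (f n) s (T s) = ∅ := by
      rw [absBand, Set.Ioc_eq_empty (by exact_mod_cast not_lt.2 hle), Set.preimage_empty]
    rw [hempty, Set.indicator_empty] at hn
    exact hε.not_gt (by simpa [mNorm] using hn)
  have hsucc : ∀ k, T^[k + 1] 0 = T (T^[k] 0) := fun k => Function.iterate_succ_apply' T k 0
  have hmono : Monotone fun k => T^[k] 0 :=
    monotone_nat_of_le_succ fun k => hsucc k ▸ (hlt _).le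
  obtain ⟨K, hK⟩ :=
    hm.exists_eventually_exists_mNorm_absBand_le hac hf hC hGH hG hH hmono hε
  have hall : ∀ᶠ n in (hyperfilter ℕ : Filter ℕ), ∀ k ∈ Finset.range K,
      ε < mNorm m ((absBand (f n) (T^[k] 0 : ℕ) (T^[k + 1] 0 : ℕ)).indicator (f n)) :=
    (Finset.range K).eventually_all.2 fun k _ => by
      rw [hsucc]
      exact hT _
  obtain ⟨n, hn, k, hk, hle⟩ := (hall.and (Nat.hyperfilter_le_atTop hK)).exists
  exact (hn k (Finset.mem_range.2 hk)).not_ge hle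

theorem exists_subseq_mNorm_absBand_le [CompleteSpace X] [IsFiniteMeasure μ]
    (hm : B.PositiveMeasure m) (hX : B.SSP) (hac : B.UnifAC {m Set.univ})
    (hf : ∀ n, MIntegrable m (f n)) (hC : ∀ n, mNorm m (f n) ≤ C) :
    ∃ (s σ : ℕ → ℕ), StrictMono σ ∧ ∀ i, ∀ j ≤ i,
      mNorm m ((absBand (f (σ i)) (s j) (2 ^ i)).indicator (f (σ i))) ≤ (1 / 2) ^ j := by
  obtain ⟨σ, hσ, G, H, hGH, -, hG, hH⟩ := hX (fun n => mIntegral m (fun ω => |f n ω|) Set.univ)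
    ⟨C, fun n => (hm.mNorm_eq (hf n)).symm.trans_le (hC n)⟩
  choose s hs using fun j : ℕ => hm.exists_forall_eventually_mNorm_absBand_le hac
    (fun n => hf (σ n)) (fun n => hC (σ n)) hGH hG hH (ε := (1 / 2) ^ j) (by positivity)
  have hfreq : ∀ i, ∃ᶠ n in atTop, ∀ j ∈ Finset.range (i + 1),
      mNorm m ((absBand (f (σ n)) (s j) (2 ^ i)).indicator (f (σ n))) ≤ (1 / 2) ^ j := by
    intro i
    have hev := (Finset.range (i + 1)).eventually_all.2 fun j _ => hs j (2 ^ i)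
    simp only [Nat.cast_pow, Nat.cast_ofNat] at hev
    exact hev.frequently.filter_mono Nat.hyperfilter_le_atTop
  obtain ⟨ρ, hρ, hband⟩ := extraction_forall_of_frequently hfreq
  exact ⟨s, σ ∘ ρ, hσ.comp hρ, fun i j hji =>
    hband i j (Finset.mem_range.2 (Nat.lt_succ_of_le hji))⟩

theorem unifACNorm_range_indicator_compl_diff (hm : B.PositiveMeasure m) {η : Measure Ω}
    (hη : ∀ φ : X →L[ℝ] ℝ, (dualApply m φ).totalVariation ≪ η) (hf : ∀ n, MIntegrable m (f n))
    {s t : ℕ → ℝ} (hband : ∀ i, ∀ j ≤ i,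
      mNorm m ((absBand (f i) (s j) (t i)).indicator (f i)) ≤ (1 / 2) ^ j)
    {U : ℕ → Set Ω} (hU : ∀ i, MeasurableSet (U i))
    (hUf : ∀ i, mNorm m ((U i).indicator (f i)) ≤ (1 / 2) ^ i) :
    UnifACNorm η (mNorm m) (Set.range fun i => ({ω | t i < |f i ω|} \ U i)ᶜ.indicator (f i)) := by
  have hlarge : ∀ i, MeasurableSet {ω | t i < |f i ω|} := fun i =>
    measurableSet_lt measurable_const (hf i).1.abs
  refine unifACNorm_range_of_tail
    (fun i => hm.unifACNorm_singleton hη ((hf i).indicator ((hlarge i).diff (hU i)).compl))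
    fun ε hε => ?_
  obtain ⟨J, hJ⟩ := exists_pow_lt_of_lt_one (div_pos hε three_pos) (one_half_lt_one (α := ℝ))
  obtain ⟨δ, hδ, hconst⟩ := hm.unifACNorm_singleton hη (.const m (s J)) (ε / 3) (by positivity)
  refine ⟨J, δ, hδ, fun A hA hAδ i hi => ?_⟩
  have hsum := mNorm_indicator_compl_diff_le (hf i) hA (hU i) (s J) (t i)
  have hUJ := (hUf i).trans (pow_le_pow_of_le_one (by norm_num) (by norm_num) hi)
  linarith [hconst A hA hAδ _ rfl, hband i J hi]

theorem exists_subseq_unifACNorm_indicator_compl [CompleteSpace X] [IsFiniteMeasure μ]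
    (hm : B.PositiveMeasure m) (hX : B.SSP) (hac : B.UnifAC {m Set.univ})
    (hφ : ∀ ψ : X →L[ℝ] ℝ, (dualApply m ψ).totalVariation ≪ (dualApply m φ).totalVariation)
    (hf : ∀ n, MIntegrable m (f n)) (hC : ∀ n, mNorm m (f n) ≤ C) :
    ∃ (σ : ℕ → ℕ) (D : ℕ → Set Ω), StrictMono σ ∧ (∀ n, MeasurableSet (D n)) ∧
      Pairwise (Function.onFun Disjoint D) ∧
      UnifACNorm (dualApply m φ).totalVariation (mNorm m)
        (Set.range fun n => (D n)ᶜ.indicator (f (σ n))) := by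
  obtain ⟨s, σ, hσ, hband⟩ := hm.exists_subseq_mNorm_absBand_le hX hac hf hC
  set E : ℕ → Set Ω := fun i => {ω | 2 ^ i < |f (σ i) ω|}
  have hE : ∀ i, MeasurableSet (E i) := fun i => measurableSet_lt measurable_const (hf _).1.abs
  have hEsum := tsum_totalVariation_two_pow_lt_ne_top (fun n => hf (σ n)) (fun n => hC (σ n)) φ
  choose d hd hsmall using fun i : ℕ =>
    hm.unifACNorm_singleton hφ (hf (σ i)) ((1 / 2) ^ i) (by positivity)
  obtain ⟨τ, hτ, hτd⟩ := exists_strictMono_forall_measure_biUnion_Ici_lt hEsum hd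
  set U : ℕ → Set Ω := fun i => ⋃ j ∈ Set.Ici (τ (i + 1)), E j
  have hU : ∀ i, MeasurableSet (U i) := fun i => .biUnion (Set.to_countable _) fun j _ => hE j
  refine ⟨σ ∘ τ, fun i => E (τ i) \ U i, hσ.comp hτ, fun i => (hE _).diff (hU i),
    pairwise_disjoint_diff_biUnion_Ici E hτ, ?_⟩
  refine hm.unifACNorm_range_indicator_compl_diff hφ (fun n => hf (σ (τ n)))
    (fun i j hji => hband (τ i) j (hji.trans (hτ.le_apply))) hU fun i => ?_
  exact (hsmall (τ i) _ (hU i) (hτd i) _ rfl).trans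
    (pow_le_pow_of_le_one (by norm_num) (by norm_num) hτ.le_apply)

end BFS.PositiveMeasure

end Splitting

/-! ### The weak Banach-Saks property of `L¹(m)` -/

section WeakBanachSaks

variable {m : VectorMeasure Ω X} {φ : X →L[ℝ] ℝ}

theorem abs_eq_indicator_compl_add_neg_smul {α : Type*} {h : ℕ → α → ℝ}
    (hdisj : ∀ i j, i ≠ j → ∀ ω, h i ω * h j ω = 0) (n : ℕ) :
    (fun ω => |h n ω|) =
      (⋃ i, {ω | h i ω < 0})ᶜ.indicator (h n) +
        (-1 : ℝ) • (⋃ i, {ω | h i ω < 0}).indicator (h n) := by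
  ext ω
  rw [Pi.add_apply, Pi.smul_apply, smul_eq_mul, neg_one_mul]
  by_cases hω : ω ∈ ⋃ i, {ω | h i ω < 0}
  · rw [Set.indicator_of_notMem (not_not.2 hω), Set.indicator_of_mem hω, zero_add]
    obtain ⟨i, hi : h i ω < 0⟩ := Set.mem_iUnion.1 hω
    obtain rfl | hin := eq_or_ne i n
    · exact abs_of_neg hi
    · rw [(mul_eq_zero.1 (hdisj i n hin ω)).resolve_left hi.ne, abs_zero, neg_zero]
  · rw [Set.indicator_of_mem hω, Set.indicator_of_notMem hω, neg_zero, add_zero]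
    exact abs_of_nonneg (not_lt.1 fun hneg => hω (Set.mem_iUnion.2 ⟨n, hneg⟩))

/- Disjointness makes the sign of `h n` on its support independent of `n`, so that `|h n|` is the
product of `h n` with a fixed bounded function. -/
theorem WeaklyNullSeq.tendsto_apply_mIntegral_abs {h : ℕ → Ω → ℝ} (hh : ∀ n, MIntegrable m (h n))
    (hnull : WeaklyNullSeq (MIntegrable m) (mNorm m) h)
    (hdisj : ∀ i j, i ≠ j → ∀ ω, h i ω * h j ω = 0) (φ : X →L[ℝ] ℝ) :
    Tendsto (fun n => φ (mIntegral m (fun ω => |h n ω|) Set.univ)) atTop (𝓝 0) := by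
  have hP : MeasurableSet (⋃ i, {ω | h i ω < 0}) :=
    .iUnion fun i => measurableSet_lt (hh i).1 measurable_const
  have hdiff := (hnull _ (isBddLinFunctional_mIntegral φ hP.compl)).sub
    (hnull _ (isBddLinFunctional_mIntegral φ hP))
  rw [sub_zero] at hdiff
  refine hdiff.congr fun n => ?_
  rw [abs_eq_indicator_compl_add_neg_smul hdisj, mIntegral_add ((hh n).indicator hP.compl)
    (((hh n).indicator hP).smul _) .univ, mIntegral_smul _ ((hh n).indicator hP) .univ,
    mIntegral_indicator (hh n) hP.compl .univ, mIntegral_indicator (hh n) hP .univ,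
    Set.inter_univ, Set.inter_univ, map_add, map_smul, neg_one_smul, ← sub_eq_add_neg]

theorem WeaklyNullSeq.comp {α : Type*} {N : (α → ℝ) → ℝ} {mem : (α → ℝ) → Prop}
    {f : ℕ → α → ℝ} (hf : WeaklyNullSeq mem N f) {σ : ℕ → ℕ} (hσ : StrictMono σ) :
    WeaklyNullSeq mem N fun n => f (σ n) :=
  fun T hT => (hf T hT).comp hσ.tendsto_atTop

theorem WeaklyNullSeq.of_add_left {α : Type*} {N : (α → ℝ) → ℝ} {mem : (α → ℝ) → Prop}
    {f g : ℕ → α → ℝ} (hf : ∀ n, mem (f n)) (hg : ∀ n, mem (g n))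
    (hfg : WeaklyNullSeq mem N fun n => f n + g n) (hfnull : WeaklyNullSeq mem N f) :
    WeaklyNullSeq mem N g := by
  intro T hT
  have hdiff := (hfg T hT).sub (hfnull T hT)
  simpa only [hT.1 _ _ (hf _) (hg _), add_sub_cancel_left, sub_zero] using hdiff

theorem mIntegral_cesaroMean {f : ℕ → Ω → ℝ} (hf : ∀ n, MIntegrable m (f n)) (n : ℕ) :
    mIntegral m (cesaroMean f n) Set.univ = cesaroMean (fun k => mIntegral m (f k) Set.univ) n := by
  rw [cesaroMean, mIntegral_smul _ (.sum _ hf) .univ, mIntegral_sum _ hf, cesaroMean]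

theorem abs_cesaroMean_apply_le {α : Type*} (f : ℕ → α → ℝ) (n : ℕ) (ω : α) :
    |cesaroMean f n ω| ≤ cesaroMean (fun k ω => |f k ω|) n ω := by
  simp only [cesaroMean, Pi.smul_apply, Finset.sum_apply, smul_eq_mul, abs_mul, abs_inv,
    Nat.abs_cast]
  gcongr
  exact Finset.abs_sum_le_sum_abs _ _

theorem indicator_mul_indicator_eq_zero {α : Type*} {A A' : Set α} (h : Disjoint A A')
    (f g : α → ℝ) (ω : α) : A.indicator f ω * A'.indicator g ω = 0 := by
  rw [← Set.inter_indicator_mul, h.inter_eq, Set.indicator_empty]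

namespace BFS.PositiveMeasure

variable {B : BFS S μ X}

theorem mNorm_cesaroMean_le (hm : B.PositiveMeasure m) {f : ℕ → Ω → ℝ}
    (hf : ∀ n, MIntegrable m (f n)) (n : ℕ) :
    mNorm m (cesaroMean f n) ≤
      ‖cesaroMean (fun k => mIntegral m (fun ω => |f k ω|) Set.univ) n‖ := by
  have habs : ∀ k, MIntegrable m fun ω => |f k ω| := fun k => (hf k).abs
  rw [hm.mNorm_eq (.cesaroMean hf n), ← mIntegral_cesaroMean habs]
  exact hm.norm_mIntegral_mono (MIntegrable.cesaroMean hf n).abs (.cesaroMean habs n)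
    (fun _ => abs_nonneg _) (abs_cesaroMean_apply_le f n) .univ

theorem hasSSP [CompleteSpace X] [IsFiniteMeasure μ] (hm : B.PositiveMeasure m) (hX : B.SSP)
    (hac : B.UnifAC {m Set.univ})
    (hφ : ∀ ψ : X →L[ℝ] ℝ, (dualApply m ψ).totalVariation ≪ (dualApply m φ).totalVariation) :
    HasSSP (dualApply m φ).totalVariation (MIntegrable m) (mNorm m) := by
  rintro f hf ⟨C, hC⟩
  obtain ⟨σ, D, hσ, hD, hdisj, hU⟩ := hm.exists_subseq_unifACNorm_indicator_compl hX hac hφ hf hC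
  exact ⟨σ, hσ, fun n => (D n)ᶜ.indicator (f (σ n)), fun n => (D n).indicator (f (σ n)),
    fun n => (hf _).indicator (hD n).compl, fun n => (hf _).indicator (hD n),
    fun n => (Set.indicator_compl_add_self _ _).symm,
    fun n => .of_forall (indicator_mul_indicator_eq_zero disjoint_compl_left _ _), hU,
    fun i j hij => .of_forall (indicator_mul_indicator_eq_zero (hdisj hij) _ _)⟩

theorem exists_subseq_tendsto_mNorm_cesaroMean (hm : B.PositiveMeasure m)
    (hWBS : WeakBanachSaks X) {f : ℕ → Ω → ℝ} (hf : ∀ n, MIntegrable m (f n))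
    (hnull : WeaklyNullSeq (MIntegrable m) (mNorm m) f) {D : ℕ → Set Ω}
    (hD : ∀ n, MeasurableSet (D n)) (hdisj : Pairwise (Function.onFun Disjoint D))
    (hU : UnifACNorm (dualApply m φ).totalVariation (mNorm m)
      (Set.range fun n => (D n)ᶜ.indicator (f n))) :
    ∃ σ : ℕ → ℕ, StrictMono σ ∧
      Tendsto (fun n => mNorm m (cesaroMean (fun k => f (σ k)) n)) atTop (𝓝 0) := by
  set g : ℕ → Ω → ℝ := fun n => (D n)ᶜ.indicator (f n)
  set h : ℕ → Ω → ℝ := fun n => (D n).indicator (f n)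
  have hg : ∀ n, MIntegrable m (g n) := fun n => (hf n).indicator (hD n).compl
  have hh : ∀ n, MIntegrable m (h n) := fun n => (hf n).indicator (hD n)
  have hgh : ∀ n, g n + h n = f n := fun n => Set.indicator_compl_add_self _ _
  obtain ⟨C, hC⟩ := exists_mNorm_le_of_weaklyNullSeq hf hnull
  have hgC : ∀ n, mNorm m (g n) ≤ C := fun n => (mNorm_indicator_le (hf n) _).trans (hC n)
  have hlim : ∀ A, MeasurableSet A →
      Tendsto (fun n => ∫ ω in A, g n ω ∂(dualApply m φ).totalVariation) atTop (𝓝 0) :=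
    fun A hA => tendsto_setIntegral_indicator_compl hf hnull hD hdisj hU hA
  have hhnull : WeaklyNullSeq (MIntegrable m) (mNorm m) h :=
    .of_add_left hg hh (by simpa only [hgh] using hnull) (UnifACNorm.weaklyNullSeq hg hgC hU hlim)
  obtain ⟨σ, hσ, hgmean⟩ := UnifACNorm.exists_subseq_tendsto_mNorm_cesaroMean hg hgC hU hlim
  obtain ⟨τ, hτ, hhmean⟩ := hWBS (fun n => mIntegral m (fun ω => |h (σ n) ω|) Set.univ) fun ψ =>
    (hhnull.tendsto_apply_mIntegral_abs hh
      (fun i j hij => indicator_mul_indicator_eq_zero (hdisj hij) _ _) ψ).comp hσ.tendsto_atTop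
  refine ⟨σ ∘ τ, hσ.comp hτ, squeeze_zero (fun _ => mNorm_nonneg _ _) (fun n => ?_)
    (by simpa only [add_zero] using (hgmean τ hτ).add hhmean)⟩
  simp only [← hgh, Function.comp_apply]
  rw [cesaroMean_add]
  exact (mNorm_add_le (.cesaroMean (fun k => hg _) n) (.cesaroMean (fun k => hh _) n)).trans
    (add_le_add_right (hm.mNorm_cesaroMean_le (fun k => hh (σ (τ k))) n) _)

theorem hasWBS [CompleteSpace X] [IsFiniteMeasure μ] (hm : B.PositiveMeasure m)
    (hWBS : WeakBanachSaks X) (hX : B.SSP) (hac : B.UnifAC {m Set.univ})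
    (hφ : ∀ ψ : X →L[ℝ] ℝ, (dualApply m ψ).totalVariation ≪ (dualApply m φ).totalVariation) :
    HasWBS (MIntegrable m) (mNorm m) := by
  intro f hf hnull
  obtain ⟨C, hC⟩ := exists_mNorm_le_of_weaklyNullSeq hf hnull
  obtain ⟨σ, D, hσ, hD, hdisj, hU⟩ := hm.exists_subseq_unifACNorm_indicator_compl hX hac hφ hf hC
  obtain ⟨τ, hτ, hmean⟩ := hm.exists_subseq_tendsto_mNorm_cesaroMean hWBS (fun n => hf (σ n))
    (hnull.comp hσ) hD hdisj hU
  exact ⟨σ ∘ τ, hσ.comp hτ, hmean⟩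

end BFS.PositiveMeasure

end WeakBanachSaks

theorem statement3_general [IsFiniteMeasure μ] [CompleteSpace X] (B : BFS S μ X)
    (m : VectorMeasure Ω X) (hWBS : WeakBanachSaks X) (hX : B.SSP)
    (hpos : ∀ A : Set Ω, MeasurableSet A → ∀ᵐ s ∂μ, 0 ≤ B.J (m A) s)
    (hac : B.UnifAC {m Set.univ}) (x₀ : X →L[ℝ] ℝ)
    (hRyb : ∀ A : Set Ω, MeasurableSet A →
      ((dualApply m x₀).totalVariation A = 0 ↔ semivar m A = 0)) :
    HasSSP (dualApply m x₀).totalVariation (MIntegrable m) (mNorm m) ∧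
      HasWBS (MIntegrable m) (mNorm m) := by
  have hm : B.PositiveMeasure m := hpos
  have htv := totalVariation_absolutelyContinuous fun A hA => (hRyb A hA).1
  exact ⟨hm.hasSSP hX hac htv, hm.hasWBS hWBS hX hac htv⟩

/-- if `X` has the weak Banach-Saks property, `X` and `X*` have the subsequence
splitting property, `m` is separable and positive and the range of `m` has uniformly a.c.
norm in `X`, then `L¹(m)` has both the subsequence splitting property and the weak
Banach-Saks property. -/
theorem statement3
    {S : Type*} [MeasurableSpace S] {μ : Measure S} [IsFiniteMeasure μ]
    {X : Type*} [NormedAddCommGroup X] [NormedSpace ℝ X] [CompleteSpace X]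
    (B : BFS S μ X)
    {Ω : Type*} [MeasurableSpace Ω] (m : VectorMeasure Ω X)
    (hWBS : WeakBanachSaks X)
    (hX : B.SSP)
    (B' : BFS S μ (X →L[ℝ] ℝ))
    (hB'rep : ∀ (φ : X →L[ℝ] ℝ) (x : X), φ x = ∫ s, B.J x s * B'.J φ s ∂μ)
    (hXdual : B'.SSP)
    (hsep : SeparableVM m)
    (hpos : ∀ A : Set Ω, MeasurableSet A → ∀ᵐ s ∂μ, 0 ≤ B.J (m A) s)
    (hrange : B.UnifAC {x : X | ∃ A : Set Ω, MeasurableSet A ∧ m A = x})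
    (x₀ : X →L[ℝ] ℝ)
    (hRyb : ∀ A : Set Ω, MeasurableSet A →
      ((dualApply m x₀).totalVariation A = 0 ↔ semivar m A = 0)) :
    HasSSP ((dualApply m x₀).totalVariation) (MIntegrable m) (mNorm m) ∧
      HasWBS (MIntegrable m) (mNorm m) := by
  have hac : B.UnifAC {m Set.univ} := fun ε hε => (hrange ε hε).imp fun δ hδ =>
    ⟨hδ.1, fun A hA hAδ x hx => hδ.2 A hA hAδ x ⟨Set.univ, .univ, hx.symm⟩⟩
  exact statement3_general B m hWBS hX hpos hac x₀ hRyb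

end Paper
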